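/- arXiv:1706.01645 — 8 statements merged into one kernel-verified Lean document; each statement's English description precedes it below -/
import Mathlib

section
/- Let p and q be distinct primes and let (G, H, T) be a faithful RCC loop folder of order pq with ⟨T⟩ = G (i.e., the envelope of an RCC loop of order pq). Then H is not a maximal subgroup of G; that is, there exists a subgroup K of G with H < K < G (equivalently, G acts imprimitively on the set of right cosets of H in G). -/
/-- A loop folder `(G, H, T)`: `T` contains `1` and is a transversal for the right cosets
of every conjugate `H^g = g⁻¹Hg` of `H` in `G` (note `H^g x = H^g t ↔ g*(x*t⁻¹)*g⁻¹ ∈ H`). -/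
def IsLoopFolder {G : Type*} [Group G] (H : Subgroup G) (T : Set G) : Prop :=
  (1 : G) ∈ T ∧ ∀ g x : G, ∃! t, t ∈ T ∧ g * (x * t⁻¹) * g⁻¹ ∈ H

/-- The loop folder is right conjugacy closed: `T` is invariant under conjugation by `G`. -/
def IsRCC {G : Type*} [Group G] (T : Set G) : Prop :=
  ∀ t ∈ T, ∀ g : G, g⁻¹ * t * g ∈ T

/-- The loop folder is faithful: the core `⋂_{g ∈ G} g⁻¹Hg` of `H` in `G` is trivial. -/
def IsFaithfulFolder {G : Type*} [Group G] (H : Subgroup G) : Prop :=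
  ∀ x : G, (∀ g : G, g * x * g⁻¹ ∈ H) → x = 1

/-!
Let `q < p` and suppose that `H` is maximal, so that `G` acts primitively on the `pq` cosets of `H`.
The orbits of a Sylow `p`-subgroup `P` all have length `p`, and no `y ≠ 1` fixes half of the points.
Hence `P` is abelian and distinct Sylow `p`-subgroups meet trivially. Let `K` be the normal
`p`-complement of `C(P)`. An element of `T` that centralizes `P` but lies outside `K` has order
divisible by `p`, and so determines `P`. Counting these elements over the `m ≡ 1 [MOD p]` Sylow
subgroups gives `m < pq`, then `|P| = p` and `|T ∩ C(P)| = p`, and, once `m = p + 1` is excluded,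
`2|T ∩ K| > q`.

Since `p` divides `|T ∩ C(y) ∩ C(P)|` for every `y ∈ C(P)` with a fixed point, such a `y` commutes
with `T ∩ C(P)`; it then fixes more than half of the points, so `y = 1`. Therefore `K` acts freely,
which forces `|K| = q`, and `N(K) = N(P)` because `m < (p + 1)²`. As `q` is prime, `P` is now
determined by every nontrivial element of `C(P)`, so the `p - 1` nontrivial elements of `T ∩ C(P)`
give `m(p - 1) < pq`, contradicting `m ≥ p + 1`.
-/

open MulAction Pointwise

section Counting

variable {ι α : Type*}

theorem card_mul_le_ncard_of_pairwise_disjoint [Finite ι] {A : ι → Set α} {B : Set α} {n : ℕ}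
    (hB : B.Finite) (hA : ∀ i, A i ⊆ B) (hdisj : Pairwise fun i j ↦ Disjoint (A i) (A j))
    (hn : ∀ i, n ≤ (A i).ncard) : Nat.card ι * n ≤ B.ncard := by
  have := Fintype.ofFinite ι
  have (i : ι) : Finite (A i) := hB.subset (hA i)
  have := hB.to_subtype
  have hinj : Function.Injective fun x : Σ i, A i ↦ (⟨x.2, hA x.1 x.2.2⟩ : B) := by
    rintro ⟨i, x, hx⟩ ⟨j, y, hy⟩ hxy
    obtain rfl : x = y := congrArg Subtype.val hxy
    obtain rfl : i = j := hdisj.eq (Set.not_disjoint_iff.mpr ⟨x, hx, hy⟩)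
    rfl
  calc Nat.card ι * n = ∑ _i : ι, n := by simp
    _ ≤ ∑ i, (A i).ncard := Finset.sum_le_sum fun i _ ↦ hn i
    _ = Nat.card (Σ i, A i) := by simp only [Nat.card_sigma, Nat.card_coe_set_eq]
    _ ≤ B.ncard := Nat.card_le_card_of_injective _ hinj

theorem add_one_le_of_modEq_one {p m : ℕ} (h : m ≡ 1 [MOD p]) (hm : m ≠ 1) (hp : 1 < p) :
    p + 1 ≤ m := by
  have hm0 : m ≠ 0 := by
    rintro rfl
    exact hp.ne' (Nat.dvd_one.mp ((Nat.modEq_zero_iff_dvd).mp h.symm))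
  have := Nat.le_of_dvd (by lia) ((Nat.modEq_iff_dvd' (by lia)).mp h.symm)
  lia

theorem two_mul_add_one_le_of_modEq_one {p m : ℕ} (h : m ≡ 1 [MOD p]) (hm : p + 1 < m) :
    2 * p + 1 ≤ m := by
  have hmod : m - p ≡ 1 [MOD p] := by
    apply Nat.ModEq.add_right_cancel' p
    rw [Nat.sub_add_cancel (by lia)]
    simpa using h
  obtain rfl | rfl | hp : p = 0 ∨ p = 1 ∨ 1 < p := by lia
  · lia
  · lia
  · have := add_one_le_of_modEq_one hmod (by lia) hp
    lia

theorem mul_le_add_one_mul_sub_one {p q : ℕ} (h : q < p) : p * q ≤ (p + 1) * (p - 1) := by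
  obtain ⟨r, rfl⟩ : ∃ r, p = r + 1 := ⟨p - 1, by lia⟩
  rw [Nat.add_sub_cancel]
  nlinarith

end Counting

section PGroup

variable {G α : Type*} [Group G] {p : ℕ} [Fact p.Prime]

theorem ncard_modEq_ncard_inter_fixedPoints [MulAction G α] (hG : IsPGroup p G) {s : Set α}
    (hs : s.Finite) (hsmul : ∀ g : G, ∀ x ∈ s, g • x ∈ s) :
    s.ncard ≡ (s ∩ fixedPoints G α).ncard [MOD p] := by
  let S : SubMulAction G α := ⟨s, fun g _ hx ↦ hsmul g _ hx⟩
  have : Finite S := hs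
  have hfix : s ∩ fixedPoints G α = Subtype.val '' fixedPoints G S := by
    ext x
    simp only [Set.mem_inter_iff, mem_fixedPoints, Set.mem_image, Subtype.exists,
      exists_and_right, exists_eq_right, Subtype.ext_iff, SubMulAction.val_smul]
    exact ⟨fun h ↦ ⟨h.1, h.2⟩, fun ⟨hx, h⟩ ↦ ⟨hx, h⟩⟩
  rw [hfix, Set.ncard_image_of_injective _ Subtype.val_injective]
  exact hG.card_modEq_card_fixedPoints S

theorem ncard_modEq_ncard_inter_centralizer {P : Subgroup G} (hP : IsPGroup p P) {A : Set G}
    (hA : A.Finite) (hconj : ∀ u ∈ P, ∀ a ∈ A, u * a * u⁻¹ ∈ A) :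
    A.ncard ≡ (A ∩ Subgroup.centralizer (P : Set G)).ncard [MOD p] := by
  have hfix : (fixedPoints (P.map MulAut.conj) G : Set G) = Subgroup.centralizer (P : Set G) := by
    ext a
    simp only [mem_fixedPoints, Subtype.forall, Subgroup.mem_map, forall_exists_index, and_imp,
      forall_apply_eq_imp_iff₂, Subgroup.mk_smul, MulAut.smul_def, MulAut.conj_apply,
      mul_inv_eq_iff_eq_mul, SetLike.mem_coe, Subgroup.mem_centralizer_iff]
  rw [← hfix]
  refine ncard_modEq_ncard_inter_fixedPoints (hP.map MulAut.conj) hA ?_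
  rintro ⟨_, u, hu, rfl⟩ a ha
  exact hconj u hu a ha

theorem isMulCommutative_of_ncard_orbit_eq [Finite G] [MulAction G α] [FaithfulSMul G α]
    (hG : IsPGroup p G) (horbit : ∀ a : α, (orbit G a).ncard = p) : IsMulCommutative G := by
  have hle (a : α) : commutator G ≤ stabilizer G a := by
    have hindex : (stabilizer G a).index = p := by rw [index_stabilizer, horbit]
    obtain ⟨n, hn⟩ := IsPGroup.iff_card.mp hG
    have hn0 : n ≠ 0 := by
      rintro rfl
      have := (stabilizer G a).index_dvd_card
      rw [hindex, hn, pow_zero] at this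
      exact (Fact.out : p.Prime).one_lt.ne' (Nat.dvd_one.mp this)
    have : (stabilizer G a).Normal := Subgroup.normal_of_index_eq_minFac_card <| by
      rw [hindex, hn, (Fact.out : p.Prime).pow_minFac hn0]
    have := isCyclic_of_prime_card (α := G ⧸ stabilizer G a) hindex
    exact Subgroup.Normal.quotient_commutative_iff_commutator_le.mp
      IsCyclic.isMulCommutative
  refine ⟨⟨fun g h ↦ commutatorElement_eq_one_iff_mul_comm.mp ?_⟩⟩
  refine FaithfulSMul.eq_of_smul_eq_smul fun a : α ↦ ?_
  rw [one_smul]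
  exact hle a (Subgroup.commutator_mem_commutator (Subgroup.mem_top g) (Subgroup.mem_top h))

theorem orbit_zpowers_eq_orbit [MulAction G α] (hG : IsPGroup p G) {x : G} {a : α}
    (horbit : (orbit G a).ncard = p) (hx : x • a ≠ a) :
    orbit (Subgroup.zpowers x) a = orbit G a := by
  have hfin : (orbit G a).Finite :=
    Set.finite_of_ncard_pos (horbit ▸ (Fact.out : p.Prime).pos)
  have hsub : orbit (Subgroup.zpowers x) a ⊆ orbit G a := orbit_subgroup_subset _ a
  have : Finite (orbit (Subgroup.zpowers x) a) := hfin.subset hsub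
  obtain ⟨n, hn⟩ := (hG.to_subgroup (Subgroup.zpowers x)).card_orbit a
  rw [Nat.card_coe_set_eq] at hn
  have hn0 : n ≠ 0 := by
    rintro rfl
    rw [pow_zero, Set.ncard_eq_one] at hn
    obtain ⟨b, hb⟩ := hn
    have hxa : x • a ∈ orbit (Subgroup.zpowers x) a :=
      mem_orbit a (⟨x, Subgroup.mem_zpowers x⟩ : Subgroup.zpowers x)
    have ha : a ∈ orbit (Subgroup.zpowers x) a := mem_orbit_self a
    rw [hb, Set.mem_singleton_iff] at hxa ha
    exact hx (hxa.trans ha.symm)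
  refine Set.eq_of_subset_of_ncard_le hsub ?_ hfin
  rw [horbit, hn]
  exact Nat.le_self_pow hn0 p

end PGroup

section Sylow

variable {G : Type*} [Group G] {p : ℕ}

theorem mem_sylow_of_mem_normalizer {P : Sylow p G} {x : G}
    (hx : IsPGroup p (Subgroup.zpowers x)) (hnorm : x ∈ Subgroup.normalizer (P : Set G)) :
    x ∈ P :=
  ((hx.inf_normalizer_sylow P).le ⟨Subgroup.mem_zpowers x, hnorm⟩).2

theorem sylow_eq_of_le_normalizer {P Q : Sylow p G}
    (h : (P : Subgroup G) ≤ Subgroup.normalizer (Q : Set G)) : P = Q := by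
  have hle : (P : Subgroup G) ≤ Q := fun x hx ↦
    mem_sylow_of_mem_normalizer (P.2.to_le (Subgroup.zpowers_le.mpr hx)) (h hx)
  exact (Sylow.ext (P.is_maximal' Q.2 hle)).symm

theorem sylow_eq_of_mul_comm {P Q : Sylow p G} (h : ∀ u ∈ P, ∀ v ∈ Q, u * v = v * u) : P = Q :=
  sylow_eq_of_le_normalizer fun u hu ↦ Subgroup.centralizer_le_normalizer _
    (Subgroup.mem_centralizer_iff.mpr fun v hv ↦ (h u hu v hv).symm)

theorem smul_sylow_eq_of_mem_centralizer {P : Sylow p G} {g : G}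
    (hg : g ∈ Subgroup.centralizer (P : Set G)) : g • P = P :=
  Sylow.smul_eq_iff_mem_normalizer.mpr (Subgroup.centralizer_le_normalizer _ hg)

theorem mem_smul_sylow {P : Sylow p G} {g u : G} : u ∈ g • P ↔ g⁻¹ * u * g ∈ P := by
  change u ∈ MulAut.conj g • (P : Subgroup G) ↔ _
  rw [Subgroup.mem_pointwise_smul_iff_inv_smul_mem, ← map_inv, MulAut.smul_def,
    MulAut.conj_apply, inv_inv]
  rfl

theorem conj_mem_centralizer_smul_sylow {P : Sylow p G} {t : G}
    (ht : t ∈ Subgroup.centralizer (P : Set G)) (g : G) :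
    g * t * g⁻¹ ∈ Subgroup.centralizer ((g • P : Sylow p G) : Set G) := by
  refine Subgroup.mem_centralizer_iff.mpr fun u hu ↦ ?_
  have h := Subgroup.mem_centralizer_iff.mp ht _ (mem_smul_sylow.mp hu)
  calc u * (g * t * g⁻¹) = g * ((g⁻¹ * u * g) * t) * g⁻¹ := by group
    _ = g * (t * (g⁻¹ * u * g)) * g⁻¹ := by rw [h]
    _ = g * t * g⁻¹ * u := by group

theorem pow_orderOf_div_mem_sylow {P : Sylow p G} {t : G}
    (ht : t ∈ Subgroup.centralizer (P : Set G)) (hord : orderOf t ≠ 0) (hp : p ∣ orderOf t) :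
    t ^ (orderOf t / p) ∈ P := by
  refine mem_sylow_of_mem_normalizer (IsPGroup.of_card (n := 1) ?_)
    (Subgroup.centralizer_le_normalizer _ (pow_mem ht _))
  rw [Nat.card_zpowers, orderOf_pow_orderOf_div hord hp, pow_one]

variable [Fact p.Prime] [Finite G]

theorem card_sylow_mul_ncard_le {A : Sylow p G → Set G} {B : Set G} (hAB : ∀ P, A P ⊆ B)
    (hconj : ∀ g P, ∀ t ∈ A P, g * t * g⁻¹ ∈ A (g • P))
    (hdisj : Pairwise fun P Q ↦ Disjoint (A P) (A Q)) (P : Sylow p G) :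
    Nat.card (Sylow p G) * (A P).ncard ≤ B.ncard := by
  refine card_mul_le_ncard_of_pairwise_disjoint B.toFinite hAB hdisj fun Q ↦ ?_
  obtain ⟨g, rfl⟩ := exists_smul_eq G P Q
  exact Set.ncard_le_ncard_of_injOn _ (hconj g P) (MulAut.conj g).injective.injOn

theorem relIndex_normalizer_sylow_modEq_one {P : Sylow p G} {N : Subgroup G}
    (hN : (P : Subgroup G) ≤ N) : (Subgroup.normalizer (P : Set G)).relIndex N ≡ 1 [MOD p] := by
  have hcard : (Subgroup.normalizer (P : Set G)).relIndex N = Nat.card (Sylow p N) :=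
    (congrArg Subgroup.index (Subgroup.subgroupOf_normalizer_eq hN)).trans
      (P.subtype hN).card_eq_index_normalizer.symm
  exact hcard ▸ card_sylow_modEq_one p N

theorem le_normalizer_sylow_of_card_sylow_lt {P : Sylow p G} {N : Subgroup G}
    (hPN : Subgroup.normalizer (P : Set G) ≤ N) (hN : N ≠ ⊤)
    (hcard : Nat.card (Sylow p G) < (p + 1) ^ 2) : N ≤ Subgroup.normalizer (P : Set G) := by
  have hp : 1 < p := (Fact.out : p.Prime).one_lt
  have hrel : (Subgroup.normalizer (P : Set G)).relIndex N ≡ 1 [MOD p] :=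
    relIndex_normalizer_sylow_modEq_one (Subgroup.le_normalizer.trans hPN)
  have hmul : (Subgroup.normalizer (P : Set G)).relIndex N * N.index = Nat.card (Sylow p G) := by
    rw [Subgroup.relIndex_mul_index hPN, P.card_eq_index_normalizer]
  have hindex : N.index ≡ 1 [MOD p] := by
    have h := hrel.mul_right N.index
    rw [hmul, one_mul] at h
    exact h.symm.trans (card_sylow_modEq_one p G)
  refine Subgroup.relIndex_eq_one.mp (by_contra fun hne ↦ hcard.not_ge ?_)
  rw [sq, ← hmul]
  exact Nat.mul_le_mul (add_one_le_of_modEq_one hrel hne hp)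
    (add_one_le_of_modEq_one hindex (mt Subgroup.index_eq_one.mp hN) hp)

end Sylow

section TrivialIntersection

variable {G : Type*} [Group G] {p : ℕ} {P Q : Sylow p G}

theorem ncard_orbit_sylow_of_disjoint (h : Disjoint (P : Subgroup G) Q) :
    (orbit (P : Subgroup G) Q).ncard = Nat.card P := by
  have hstab : stabilizer (P : Subgroup G) Q = ⊥ := by
    rw [eq_bot_iff]
    intro u hu
    have hnorm : (u : G) ∈ Subgroup.normalizer (Q : Set G) :=
      Sylow.smul_eq_iff_mem_normalizer.mp hu
    have huQ := mem_sylow_of_mem_normalizer (P.2.to_le (Subgroup.zpowers_le.mpr u.2)) hnorm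
    exact Subgroup.mem_bot.mpr (Subtype.ext (Subgroup.disjoint_def.mp h u.2 huQ))
  rw [← index_stabilizer, hstab, Subgroup.index_bot]

variable [Finite G]

theorem ncard_insert_orbit_sylow (hne : P ≠ Q) (h : Disjoint (P : Subgroup G) Q) :
    (insert P (orbit (P : Subgroup G) Q)).ncard = Nat.card P + 1 := by
  rw [Set.ncard_insert_of_notMem, ncard_orbit_sylow_of_disjoint h]
  rintro ⟨u, hu⟩
  have huP : (u : G) • P = P :=
    Sylow.smul_eq_iff_mem_normalizer.mpr (Subgroup.le_normalizer u.2)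
  exact hne (smul_left_cancel (u : G) (huP.trans hu.symm))

theorem card_lt_card_sylow [Nontrivial (Sylow p G)]
    (hTI : Pairwise fun P Q : Sylow p G ↦ Disjoint (P : Subgroup G) Q) (P : Sylow p G) :
    Nat.card P < Nat.card (Sylow p G) := by
  obtain ⟨Q, hQ⟩ := exists_ne P
  rw [← Nat.add_one_le_iff, ← ncard_insert_orbit_sylow hQ.symm (hTI hQ.symm)]
  exact Set.ncard_le_card _

-- `P` permutes the other Sylow subgroups simply transitively, and `g` commutes with this action.
theorem exists_inv_mul_mem_ker_of_card_sylow_eq [Nontrivial (Sylow p G)]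
    (hTI : Pairwise fun P Q : Sylow p G ↦ Disjoint (P : Subgroup G) Q) {P : Sylow p G}
    [IsMulCommutative P] (hcard : Nat.card (Sylow p G) = Nat.card P + 1) {g : G}
    (hg : g ∈ Subgroup.centralizer (P : Set G)) :
    ∃ u ∈ P, u⁻¹ * g ∈ (toPermHom G (Sylow p G)).ker := by
  obtain ⟨Q, hQ⟩ := exists_ne P
  have huniv : insert P (orbit (P : Subgroup G) Q) = Set.univ := by
    rw [Set.eq_univ_iff_ncard, ncard_insert_orbit_sylow hQ.symm (hTI hQ.symm), hcard]
  obtain hgQ | ⟨u, hu⟩ := huniv.symm ▸ Set.mem_univ (g • Q)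
  · exact absurd (smul_left_cancel g (hgQ.trans (smul_sylow_eq_of_mem_centralizer hg).symm)) hQ
  have huQ : (u : G) • Q = g • Q := hu
  have hcent : (u : G)⁻¹ * g ∈ Subgroup.centralizer (P : Set G) :=
    mul_mem (inv_mem (Subgroup.le_centralizer (P : Subgroup G) u.2)) hg
  have hfixQ : ((u : G)⁻¹ * g) • Q = Q := by rw [mul_smul, ← huQ, inv_smul_smul]
  refine ⟨u, u.2, MonoidHom.mem_ker.mpr (Equiv.ext fun R ↦ ?_)⟩
  change ((u : G)⁻¹ * g) • R = R
  obtain rfl | ⟨v, rfl⟩ := huniv.symm ▸ Set.mem_univ R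
  · exact smul_sylow_eq_of_mem_centralizer hcent
  · change ((u : G)⁻¹ * g) • (v : G) • Q = (v : G) • Q
    rw [← mul_smul, ← Subgroup.mem_centralizer_iff.mp hcent v v.2, mul_smul, hfixQ]

theorem sylow_eq_of_mem_centralizer_of_dvd_orderOf [Fact p.Prime]
    (hTI : Pairwise fun P Q : Sylow p G ↦ Disjoint (P : Subgroup G) Q) {t : G}
    (htP : t ∈ Subgroup.centralizer (P : Set G)) (htQ : t ∈ Subgroup.centralizer (Q : Set G))
    (hdvd : p ∣ orderOf t) : P = Q := by
  by_contra hPQ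
  have hpow : t ^ (orderOf t / p) = 1 := Subgroup.disjoint_def.mp (hTI hPQ)
    (pow_orderOf_div_mem_sylow htP (orderOf_pos t).ne' hdvd)
    (pow_orderOf_div_mem_sylow htQ (orderOf_pos t).ne' hdvd)
  have hord := orderOf_pow_orderOf_div (orderOf_pos t).ne' hdvd
  rw [hpow, orderOf_one] at hord
  exact (Fact.out : p.Prime).one_lt.ne hord

end TrivialIntersection

section CentralizerResidual

variable {G : Type*} [Group G] {p : ℕ}

/-- The `p`-residual `O^p(C_G(P))` of the centralizer of a Sylow `p`-subgroup `P`, generated by the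
elements of order prime to `p` that commute with `P`. For abelian `P` it is the normal
`p`-complement of `C_G(P)`. -/
def centralizerResidual (P : Sylow p G) : Subgroup G :=
  Subgroup.closure {g | g ∈ Subgroup.centralizer (P : Set G) ∧ ¬ p ∣ orderOf g}

theorem centralizerResidual_le_centralizer (P : Sylow p G) :
    centralizerResidual P ≤ Subgroup.centralizer (P : Set G) :=
  (Subgroup.closure_le _).mpr fun _ hg ↦ hg.1

theorem normalizer_le_normalizer_centralizerResidual (P : Sylow p G) :
    Subgroup.normalizer (P : Set G) ≤ Subgroup.normalizer (centralizerResidual P : Set G) :=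
  Subgroup.le_normalizer_closure_iff.mpr fun n hn g hg ↦ Subgroup.subset_closure <| by
    refine ⟨?_, ?_⟩
    · rw [← Sylow.smul_eq_iff_mem_normalizer.mpr hn]
      exact conj_mem_centralizer_smul_sylow hg.1 n
    · rw [← MulAut.conj_apply, MulEquiv.orderOf_eq]
      exact hg.2

theorem ncard_inter_centralizerResidual_add_ncard_sdiff [Finite G] (T : Set G) (P : Sylow p G) :
    (T ∩ centralizerResidual P).ncard +
      ((T ∩ Subgroup.centralizer (P : Set G)) \ centralizerResidual P).ncard =
    (T ∩ Subgroup.centralizer (P : Set G)).ncard := by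
  rw [← Set.ncard_inter_add_ncard_sdiff_eq_ncard (T ∩ Subgroup.centralizer (P : Set G))
    (centralizerResidual P : Set G), Set.inter_assoc,
    Set.inter_eq_right.mpr (centralizerResidual_le_centralizer P)]

variable [Fact p.Prime] [Finite G] {P : Sylow p G} [IsMulCommutative P]

theorem not_dvd_orderOf_mul_of_mem_centralizer {g h : G}
    (hg : g ∈ Subgroup.centralizer (P : Set G)) (hh : h ∈ Subgroup.centralizer (P : Set G))
    (hpg : ¬ p ∣ orderOf g) (hph : ¬ p ∣ orderOf h) : ¬ p ∣ orderOf (g * h) := by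
  let C := Subgroup.centralizer (P : Set G)
  have hPC : (P : Subgroup G) ≤ C := Subgroup.le_centralizer (P : Subgroup G)
  let Q : Sylow p C := P.subtype hPC
  have hQ : Subgroup.normalizer (Q : Set C) ≤ Subgroup.centralizer (Q : Set C) := by
    intro x _
    refine Subgroup.mem_centralizer_iff.mpr fun y hy ↦ Subtype.ext ?_
    exact Subgroup.mem_centralizer_iff.mp x.2 y hy
  let f := MonoidHom.transferSylow Q hQ
  have hker (x : C) (hx : ¬ p ∣ orderOf (x : G)) : x ∈ f.ker := by
    obtain ⟨n, hn⟩ := IsPGroup.iff_orderOf.mp Q.2 (f x)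
    have hdvd : orderOf (f x) ∣ orderOf (x : G) := by
      rw [Subgroup.orderOf_coe]
      exact orderOf_map_dvd f x
    obtain rfl | hn0 := eq_or_ne n 0
    · exact orderOf_eq_one_iff.mp (by rw [hn, pow_zero])
    · exact absurd ((dvd_pow_self p hn0).trans (hn ▸ hdvd)) hx
  have hgh : (⟨g, hg⟩ * ⟨h, hh⟩ : C) ∈ f.ker := mul_mem (hker _ hpg) (hker _ hph)
  intro hdvd
  refine MonoidHom.not_dvd_card_ker_transferSylow Q hQ (hdvd.trans ?_)
  rw [← Subgroup.orderOf_mk (g * h) (mul_mem hg hh)]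
  exact Subgroup.orderOf_dvd_natCard _ hgh

theorem mem_centralizerResidual {g : G} :
    g ∈ centralizerResidual P ↔ g ∈ Subgroup.centralizer (P : Set G) ∧ ¬ p ∣ orderOf g := by
  refine ⟨fun hg ↦ ⟨centralizerResidual_le_centralizer P hg, ?_⟩,
    fun hg ↦ Subgroup.subset_closure hg⟩
  induction hg using Subgroup.closure_induction with
  | mem x hx => exact hx.2
  | one => rw [orderOf_one]; exact (Fact.out : p.Prime).not_dvd_one
  | mul x y hx hy hpx hpy =>
    exact not_dvd_orderOf_mul_of_mem_centralizer (centralizerResidual_le_centralizer P hx)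
      (centralizerResidual_le_centralizer P hy) hpx hpy
  | inv x _ hpx => rwa [orderOf_inv]

theorem not_dvd_card_centralizerResidual : ¬ p ∣ Nat.card (centralizerResidual P) := by
  intro hdvd
  obtain ⟨g, hg⟩ := exists_prime_orderOf_dvd_card' p hdvd
  exact (mem_centralizerResidual.mp g.2).2 (by rw [Subgroup.orderOf_coe, hg])

end CentralizerResidual

section PrimePowerOrbits

variable {G Ω : Type*} [Group G] [MulAction G Ω] {p : ℕ} [Fact p.Prime]

theorem exists_mem_sylow_smul_ne {P : Sylow p G} {a : Ω}
    (horbit : (orbit (P : Subgroup G) a).ncard = p) : ∃ u ∈ P, u • a ≠ a := by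
  by_contra! h
  have hsub : orbit (P : Subgroup G) a ⊆ {a} := by
    rintro _ ⟨u, rfl⟩
    exact h u u.2
  have hle := Set.ncard_le_ncard hsub
  rw [horbit, Set.ncard_singleton] at hle
  exact hle.not_gt (Fact.out : p.Prime).one_lt

theorem exists_zpow_smul_eq_of_mem_sylow {P : Sylow p G} {x u : G} {a : Ω}
    (horbit : (orbit (P : Subgroup G) a).ncard = p) (hx : x ∈ P) (hxa : x • a ≠ a) (hu : u ∈ P) :
    ∃ n : ℤ, x ^ n • a = u • a := by
  have hmem : u • a ∈ orbit (P : Subgroup G) a := ⟨⟨u, hu⟩, rfl⟩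
  rw [← orbit_zpowers_eq_orbit P.2 (x := ⟨x, hx⟩) horbit hxa] at hmem
  obtain ⟨⟨_, n, rfl⟩, hn⟩ := hmem
  exact ⟨n, hn⟩

variable [Finite G]

theorem ncard_orbit_sylow_eq_prime [IsPretransitive G Ω] (hdvd : p ∣ Nat.card Ω)
    (hlt : Nat.card Ω < p ^ 2) (P : Sylow p G) (a : Ω) :
    (orbit (P : Subgroup G) a).ncard = p := by
  have hp : p.Prime := Fact.out
  have hΩ : (stabilizer G a).index = Nat.card Ω := by
    rw [index_stabilizer, orbit_eq_univ, Set.ncard_univ]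
  have hpos : Nat.card Ω ≠ 0 := hΩ ▸ Subgroup.index_ne_zero_of_finite
  have : Finite Ω := (Nat.card_ne_zero.mp hpos).2
  obtain ⟨n, hn⟩ := P.2.card_orbit a
  change (orbit (P : Subgroup G) a).ncard = p ^ n at hn
  have hn2 : n < 2 :=
    (Nat.pow_lt_pow_iff_right hp.one_lt).mp (hn ▸ (Set.ncard_le_card _).trans_lt hlt)
  have hn0 : n ≠ 0 := by
    rintro rfl
    have hindex : (stabilizer (P : Subgroup G) a).index = 1 := by
      rw [index_stabilizer, hn, pow_zero]
    have hstab : (P : Subgroup G) ≤ stabilizer G a := fun u hu ↦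
      (Subgroup.index_eq_one.mp hindex).ge (Subgroup.mem_top (⟨u, hu⟩ : (P : Subgroup G)))
    exact P.not_dvd_index (hdvd.trans (hΩ ▸ Subgroup.index_dvd_of_le hstab))
  rw [hn, show n = 1 by lia, pow_one]

theorem isMulCommutative_sylow_of_ncard_orbit_eq [FaithfulSMul G Ω] {P : Sylow p G}
    (horbit : ∀ a : Ω, (orbit (P : Subgroup G) a).ncard = p) : IsMulCommutative P :=
  isMulCommutative_of_ncard_orbit_eq P.2 horbit

theorem pairwise_disjoint_sylow_of_ncard_orbit_eq [Finite Ω] [FaithfulSMul G Ω]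
    (horbit : ∀ (P : Sylow p G) (a : Ω), (orbit (P : Subgroup G) a).ncard = p)
    (hfix : ∀ y : G, y ≠ 1 → 2 * (fixedBy Ω y).ncard < Nat.card Ω) :
    Pairwise fun P Q : Sylow p G ↦ Disjoint (P : Subgroup G) Q := by
  intro P Q hPQ
  refine Subgroup.disjoint_def.mpr fun {x} hxP hxQ ↦ by_contra fun hx ↦ hPQ ?_
  refine sylow_eq_of_mul_comm fun u hu v hv ↦ ?_
  have := isMulCommutative_sylow_of_ncard_orbit_eq (horbit P)
  have := isMulCommutative_sylow_of_ncard_orbit_eq (horbit Q)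
  have hux : Commute u x := setLike_mul_comm hu hxP
  have hvx : Commute v x := setLike_mul_comm hv hxQ
  -- On an orbit moved by `x`, both `u` and `v` act as powers of `x`.
  have hmoved (b : Ω) (hb : x • b ≠ b) : (u * v) • b = (v * u) • b := by
    obtain ⟨i, hi⟩ := exists_zpow_smul_eq_of_mem_sylow (horbit P b) hxP hb hu
    obtain ⟨j, hj⟩ := exists_zpow_smul_eq_of_mem_sylow (horbit Q b) hxQ hb hv
    calc (u * v) • b = (x ^ j * u) • b := by
          rw [mul_smul, ← hj, ← mul_smul, (hux.zpow_right j).eq]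
      _ = (x ^ j * x ^ i) • b := by rw [mul_smul, ← hi, mul_smul]
      _ = (x ^ i * x ^ j) • b := by rw [zpow_mul_comm]
      _ = (x ^ i * v) • b := by rw [mul_smul, hj, mul_smul]
      _ = (v * u) • b := by rw [← (hvx.zpow_right i).eq, mul_smul, hi, mul_smul]
  by_contra hne
  have hsub : (fixedBy Ω x)ᶜ ⊆ fixedBy Ω ((v * u)⁻¹ * (u * v)) := fun b hb ↦ by
    rw [mem_fixedBy, mul_smul, hmoved b hb, inv_smul_smul]
  have hle := Set.ncard_le_ncard hsub
  have hcompl := Set.ncard_add_ncard_compl (fixedBy Ω x)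
  have hx_lt := hfix x hx
  have hcomm_lt := hfix ((v * u)⁻¹ * (u * v)) fun h ↦ hne (inv_mul_eq_one.mp h).symm
  lia

end PrimePowerOrbits

theorem isBlock_of_closure_eq_top {G Ω : Type*} [Group G] [MulAction G Ω] {T : Set G}
    (hT : Subgroup.closure T = ⊤) {s : Set Ω} (hs : ∀ t ∈ T, t • s = s ∨ t • s = sᶜ) :
    IsBlock G s := by
  have hall (g : G) : g • s = s ∨ g • s = sᶜ := by
    induction hT ▸ Subgroup.mem_top g using Subgroup.closure_induction with
    | mem t ht => exact hs t ht
    | one => exact .inl (one_smul G s)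
    | mul g h _ _ hg hh =>
      rw [mul_smul]
      obtain hh | hh := hh <;> obtain hg | hg := hg <;> simp [hg, hh, Set.smul_set_compl]
    | inv g _ hg =>
      simp only [inv_smul_eq_iff, Set.smul_set_compl]
      obtain hg | hg := hg <;> simp [hg]
  refine isBlock_iff_smul_eq_or_disjoint.mpr fun g ↦ (hall g).imp_right fun hg ↦ ?_
  rw [hg]
  exact disjoint_compl_left

/-- The envelope of a right conjugacy closed loop, seen as a group acting on the set `Ω` underlying
the loop: `T` is the set of right translations. It generates the group, contains `1`, is invariant
under conjugation, and has exactly one element taking any given point to any other. -/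
structure IsRCCEnvelope {G : Type*} [Group G] (T : Set G) (Ω : Type*) [MulAction G Ω] : Prop where
  one_mem : 1 ∈ T
  conj_mem : ∀ g, ∀ t ∈ T, g * t * g⁻¹ ∈ T
  existsUnique_smul_eq : ∀ a b : Ω, ∃! t, t ∈ T ∧ t • a = b
  closure_eq_top : Subgroup.closure T = ⊤

namespace IsRCCEnvelope

variable {G Ω : Type*} [Group G] [MulAction G Ω] {T : Set G}

theorem bijOn_smul (hT : IsRCCEnvelope T Ω) (a : Ω) : Set.BijOn (· • a) T Set.univ := by
  refine ⟨fun _ _ ↦ Set.mem_univ _, fun t ht s hs hts ↦ ?_, fun b _ ↦ ?_⟩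
  · exact (hT.existsUnique_smul_eq a (s • a)).unique ⟨ht, hts⟩ ⟨hs, rfl⟩
  · exact (hT.existsUnique_smul_eq a b).exists

theorem commute_of_smul_eq (hT : IsRCCEnvelope T Ω) {y t : G} {a : Ω} (ht : t ∈ T)
    (ha : y • a = a) (hta : y • t • a = t • a) : Commute y t := by
  refine mul_inv_eq_iff_eq_mul.mp ((hT.bijOn_smul a).injOn (hT.conj_mem y t ht) ht ?_)
  simp only [mul_smul, inv_smul_eq_iff.mpr ha.symm, hta]

theorem eq_one_of_forall_commute [FaithfulSMul G Ω] (hT : IsRCCEnvelope T Ω) {y : G} {a : Ω}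
    (ha : y • a = a) (hcomm : ∀ t ∈ T, Commute y t) : y = 1 := by
  refine FaithfulSMul.eq_of_smul_eq_smul fun b : Ω ↦ ?_
  obtain ⟨t, ht, rfl⟩ := (hT.existsUnique_smul_eq a b).exists
  rw [← mul_smul, (hcomm t ht).eq, mul_smul, ha, one_smul]

theorem ncard_inter_centralizer_singleton (hT : IsRCCEnvelope T Ω) {y : G} {a : Ω}
    (ha : y • a = a) :
    (T ∩ Subgroup.centralizer {y}).ncard = (fixedBy Ω y).ncard := by
  have himage : (· • a) '' (T ∩ Subgroup.centralizer {y}) = fixedBy Ω y := by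
    apply Set.Subset.antisymm
    · rintro _ ⟨t, ⟨-, ht⟩, rfl⟩
      have hyt := Subgroup.mem_centralizer_singleton_iff.mp ht
      rw [mem_fixedBy, ← mul_smul, ← hyt, mul_smul, ha]
    · intro b hb
      obtain ⟨t, ht, rfl⟩ := (hT.existsUnique_smul_eq a b).exists
      have hyt := hT.commute_of_smul_eq ht ha hb
      exact ⟨t, ⟨ht, Subgroup.mem_centralizer_singleton_iff.mpr hyt.eq.symm⟩, rfl⟩
  rw [← himage, Set.InjOn.ncard_image ((hT.bijOn_smul a).injOn.mono Set.inter_subset_left)]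

theorem ncard_eq_card [Nonempty Ω] (hT : IsRCCEnvelope T Ω) : T.ncard = Nat.card Ω := by
  obtain ⟨a⟩ := ‹Nonempty Ω›
  rw [← Set.InjOn.ncard_image (hT.bijOn_smul a).injOn, (hT.bijOn_smul a).image_eq, Set.ncard_univ]

theorem smul_fixedBy_eq_or_disjoint (hT : IsRCCEnvelope T Ω) (y : G) {t : G} (ht : t ∈ T) :
    t • fixedBy Ω y = fixedBy Ω y ∨ Disjoint (t • fixedBy Ω y) (fixedBy Ω y) := by
  refine or_iff_not_imp_right.mpr fun hdisj ↦ ?_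
  obtain ⟨_, ⟨b, hb, rfl⟩, htb⟩ := Set.not_disjoint_iff.mp hdisj
  have hyt := hT.commute_of_smul_eq ht hb htb
  rw [smul_fixedBy, ← hyt.eq, mul_inv_cancel_right]

theorem exists_disjoint_smul_fixedBy [FaithfulSMul G Ω] (hT : IsRCCEnvelope T Ω) {y : G}
    (hy : y ≠ 1) : ∃ t ∈ T, Disjoint (t • fixedBy Ω y) (fixedBy Ω y) := by
  by_contra! h
  obtain ⟨a, ha⟩ : (fixedBy Ω y).Nonempty := by
    rw [Set.nonempty_iff_ne_empty]
    intro hempty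
    exact h 1 hT.one_mem (by simp [hempty])
  refine hy (hT.eq_one_of_forall_commute ha fun t ht ↦ hT.commute_of_smul_eq ht ha ?_)
  have hstab := (hT.smul_fixedBy_eq_or_disjoint y ht).resolve_right (h t ht)
  exact hstab.subset (Set.smul_mem_smul_set ha)

-- If `y` fixed half the points, every translation would preserve or exchange the two halves.
theorem two_mul_ncard_fixedBy_lt [Finite Ω] [FaithfulSMul G Ω] [IsPreprimitive G Ω]
    (hT : IsRCCEnvelope T Ω) (hΩ : 2 < Nat.card Ω) {y : G} (hy : y ≠ 1) :
    2 * (fixedBy Ω y).ncard < Nat.card Ω := by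
  obtain ⟨t, -, hdisj⟩ := hT.exists_disjoint_smul_fixedBy hy
  have hcompl := Set.ncard_add_ncard_compl (fixedBy Ω y)
  have hle : (t • fixedBy Ω y).ncard ≤ (fixedBy Ω y)ᶜ.ncard :=
    Set.ncard_le_ncard hdisj.subset_compl_right
  rw [Set.ncard_smul_set] at hle
  by_contra! hge
  have hblock : IsBlock G (fixedBy Ω y) := by
    refine isBlock_of_closure_eq_top hT.closure_eq_top fun s hs ↦ ?_
    refine (hT.smul_fixedBy_eq_or_disjoint y hs).imp_right fun hdisj ↦ ?_
    refine Set.eq_of_subset_of_ncard_le hdisj.subset_compl_right ?_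
    rw [Set.ncard_smul_set]
    lia
  obtain hsub | huniv := hblock.subsingleton_or_eq_univ
  · have := Set.ncard_le_one_iff_subsingleton.mpr hsub
    lia
  · rw [huniv, Set.ncard_univ] at hcompl hle
    rw [Set.compl_univ, Set.ncard_empty] at hle
    lia

end IsRCCEnvelope

section NormalSubgroups

variable {G Ω : Type*} [Group G] [MulAction G Ω] [FaithfulSMul G Ω]

theorem isPretransitive_of_normal_of_ne_bot [IsQuasiPreprimitive G Ω] {N : Subgroup G} [N.Normal]
    (hN : N ≠ ⊥) : IsPretransitive N Ω := by
  refine IsQuasiPreprimitive.isPretransitive_of_normal (G := G) fun hfix ↦ hN ?_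
  refine (Subgroup.eq_bot_iff_forall N).mpr fun g hg ↦ ?_
  refine FaithfulSMul.eq_of_smul_eq_smul fun a : Ω ↦ ?_
  rw [one_smul]
  exact mem_fixedPoints.mp (hfix.symm ▸ Set.mem_univ a) (⟨g, hg⟩ : N)

theorem card_dvd_card_of_normal [Nonempty Ω] [IsQuasiPreprimitive G Ω] {N : Subgroup G} [N.Normal]
    (hN : N ≠ ⊥) : Nat.card Ω ∣ Nat.card N := by
  obtain ⟨a⟩ := ‹Nonempty Ω›
  have := isPretransitive_of_normal_of_ne_bot (Ω := Ω) hN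
  have hdvd := (stabilizer N a).index_dvd_card
  rwa [index_stabilizer, orbit_eq_univ, Set.ncard_univ] at hdvd

variable {p : ℕ}

theorem nontrivial_sylow_of_ncard_orbit_ne [IsQuasiPreprimitive G Ω] {P : Sylow p G} {a : Ω}
    (hP : (P : Subgroup G) ≠ ⊥) (horbit : (orbit (P : Subgroup G) a).ncard ≠ Nat.card Ω) :
    Nontrivial (Sylow p G) := by
  by_contra h
  rw [not_nontrivial_iff_subsingleton] at h
  have := P.normal_of_subsingleton
  have := isPretransitive_of_normal_of_ne_bot (Ω := Ω) hP
  exact horbit (by rw [orbit_eq_univ, Set.ncard_univ])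

variable [Fact p.Prime] [Finite G]

theorem ker_toPermHom_sylow_eq_bot [Nonempty Ω] [IsQuasiPreprimitive G Ω]
    [Nontrivial (Sylow p G)]
    (hTI : Pairwise fun P Q : Sylow p G ↦ Disjoint (P : Subgroup G) Q) (hdvd : p ∣ Nat.card Ω) :
    (toPermHom G (Sylow p G)).ker = ⊥ := by
  by_contra hker
  obtain ⟨⟨x, hx⟩, hord⟩ := exists_prime_orderOf_dvd_card' p
    (hdvd.trans (card_dvd_card_of_normal (Ω := Ω) hker))
  rw [Subgroup.orderOf_mk] at hord
  have hpgroup : IsPGroup p (Subgroup.zpowers x) :=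
    IsPGroup.of_card (n := 1) (by rw [Nat.card_zpowers, hord, pow_one])
  have hmem (P : Sylow p G) : x ∈ P := mem_sylow_of_mem_normalizer hpgroup
    (Sylow.smul_eq_iff_mem_normalizer.mp (Equiv.congr_fun (MonoidHom.mem_ker.mp hx) P))
  obtain ⟨P, Q, hPQ⟩ := exists_pair_ne (Sylow p G)
  have hx1 := Subgroup.disjoint_def.mp (hTI hPQ) (hmem P) (hmem Q)
  exact (Fact.out : p.Prime).one_lt.ne (by rw [← hord, hx1, orderOf_one])

end NormalSubgroups

section CoprimeOrders

variable {G Ω : Type*} [Group G] [MulAction G Ω]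

theorem smul_eq_self_of_coprime_orderOf {u k : G} {a : Ω} (hcomm : Commute u k)
    (hcop : (orderOf u).Coprime (orderOf k)) (ha : (u * k) • a = a) : u • a = a := by
  have hpow : u ^ orderOf k ∈ stabilizer G a := by
    have := pow_mem (mem_stabilizer_iff.mpr ha) (orderOf k)
    rwa [hcomm.mul_pow, pow_orderOf_eq_one, mul_one] at this
  obtain ⟨n, hn⟩ := exists_pow_eq_self_of_coprime hcop.symm
  exact mem_stabilizer_iff.mp (hn ▸ pow_mem hpow n)

theorem card_dvd_card_of_stabilizer_eq_bot (h : ∀ a : Ω, stabilizer G a = ⊥) :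
    Nat.card G ∣ Nat.card Ω := by
  rw [Nat.card_congr (selfEquivOrbitsQuotientProd h), Nat.card_prod]
  exact dvd_mul_left _ _

theorem coprime_orderOf_of_mem_sylow {p : ℕ} [Fact p.Prime] {P : Sylow p G} {u k : G} (hu : u ∈ P)
    (hk : ¬ p ∣ orderOf k) : (orderOf u).Coprime (orderOf k) := by
  obtain ⟨n, hn⟩ := IsPGroup.iff_orderOf.mp P.2 ⟨u, hu⟩
  rw [Subgroup.orderOf_mk] at hn
  rw [hn]
  exact (((Fact.out : p.Prime).coprime_iff_not_dvd).mpr hk).pow_left n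

end CoprimeOrders

namespace IsRCCEnvelope

variable {G Ω : Type*} [Group G] [MulAction G Ω] {T : Set G} {p : ℕ} [Fact p.Prime] [Finite G]

theorem eq_of_smul_eq_smul_of_mem_centralizerResidual (hT : IsRCCEnvelope T Ω) {P : Sylow p G}
    [IsMulCommutative P] {s t u : G} {a : Ω} (hs : s ∈ T ∩ centralizerResidual P)
    (ht : t ∈ T ∩ centralizerResidual P) (hu : u ∈ P) (h : s • a = u • t • a) : s = t := by
  have hst : s⁻¹ * t ∈ centralizerResidual P := mul_mem (inv_mem hs.2) ht.2
  have hcomm {k : G} (hk : k ∈ centralizerResidual P) : Commute u k :=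
    Subgroup.mem_centralizer_iff.mp (centralizerResidual_le_centralizer P hk) u hu
  have hfix : (u * (s⁻¹ * t)) • a = a := by
    rw [← mul_assoc, (hcomm (inv_mem hs.2)).eq, mul_assoc, mul_smul, mul_smul, ← h, inv_smul_smul]
  have hua := smul_eq_self_of_coprime_orderOf (hcomm hst)
    (coprime_orderOf_of_mem_sylow hu (mem_centralizerResidual.mp hst).2) hfix
  refine (hT.bijOn_smul a).injOn hs.1 ht.1 ?_
  rw [h, ← mul_smul, (hcomm ht.2).eq, mul_smul, hua]

theorem mul_ncard_inter_centralizerResidual_le (hT : IsRCCEnvelope T Ω) {P : Sylow p G}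
    [IsMulCommutative P] (horbit : ∀ a : Ω, (orbit (P : Subgroup G) a).ncard = p) {s : Set Ω}
    (hs : s.Finite) {a : Ω} (hmem : ∀ t ∈ T ∩ centralizerResidual P, ∀ u ∈ P, u • t • a ∈ s) :
    (T ∩ centralizerResidual P).ncard * p ≤ s.ncard := by
  refine card_mul_le_ncard_of_pairwise_disjoint
    (A := fun t : ↥(T ∩ centralizerResidual P : Set G) ↦ orbit (P : Subgroup G) ((t : G) • a))
    hs ?_ ?_ fun t ↦ (horbit _).ge
  · rintro t _ ⟨u, rfl⟩
    exact hmem t t.2 u u.2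
  · intro t t' hne
    refine (orbit.eq_or_disjoint _ _).resolve_left fun heq ↦ hne (Subtype.ext ?_)
    obtain ⟨u, hu⟩ := orbit_eq_iff.mp heq
    exact hT.eq_of_smul_eq_smul_of_mem_centralizerResidual t.2 t'.2 u.2 hu.symm

theorem prime_dvd_ncard_inter_centralizer [Finite Ω] (hT : IsRCCEnvelope T Ω) {P : Sylow p G}
    (horbit : ∀ a : Ω, (orbit (P : Subgroup G) a).ncard = p) {y : G} {a : Ω}
    (hy : y ∈ Subgroup.centralizer (P : Set G)) (ha : y • a = a) :
    p ∣ (T ∩ Subgroup.centralizer {y} ∩ Subgroup.centralizer (P : Set G)).ncard := by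
  have hyu {u : G} (hu : u ∈ P) : Commute u y := Subgroup.mem_centralizer_iff.mp hy u hu
  have hfix : (fixedBy Ω y).ncard ≡ 0 [MOD p] := by
    have hempty : fixedBy Ω y ∩ fixedPoints (P : Subgroup G) Ω = ∅ := by
      refine Set.eq_empty_of_forall_notMem fun b ⟨_, hb⟩ ↦ ?_
      obtain ⟨u, hu, hub⟩ := exists_mem_sylow_smul_ne (horbit b)
      exact hub (hb ⟨u, hu⟩)
    rw [← Set.ncard_empty Ω, ← hempty]
    refine ncard_modEq_ncard_inter_fixedPoints P.2 (Set.toFinite _) fun u b hb ↦ ?_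
    change y • (u : G) • b = (u : G) • b
    rw [← mul_smul, ← (hyu u.2).eq, mul_smul, mem_fixedBy.mp hb]
  rw [← hT.ncard_inter_centralizer_singleton ha] at hfix
  refine Nat.modEq_zero_iff_dvd.mp (Nat.ModEq.trans (Nat.ModEq.symm ?_) hfix)
  refine ncard_modEq_ncard_inter_centralizer P.2 (Set.toFinite _) fun u hu t ht ↦ ?_
  refine ⟨hT.conj_mem u t ht.1, Subgroup.mem_centralizer_singleton_iff.mpr ?_⟩
  have hty : Commute t y := Subgroup.mem_centralizer_singleton_iff.mp ht.2
  exact ((hyu hu).mul_left hty).mul_left (hyu hu).inv_left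

theorem prime_dvd_ncard_inter_centralizer_sylow [Finite Ω] [Nonempty Ω] (hT : IsRCCEnvelope T Ω)
    {P : Sylow p G} (horbit : ∀ a : Ω, (orbit (P : Subgroup G) a).ncard = p) :
    p ∣ (T ∩ Subgroup.centralizer (P : Set G)).ncard := by
  obtain ⟨a⟩ := ‹Nonempty Ω›
  have hcent : Subgroup.centralizer ({1} : Set G) = ⊤ :=
    Subgroup.centralizer_eq_top_iff_subset.mpr (by simp)
  have h := hT.prime_dvd_ncard_inter_centralizer horbit (Subgroup.one_mem _) (one_smul G a)
  rwa [hcent, Subgroup.coe_top, Set.inter_univ] at h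

theorem ncard_inter_ne_zero (hT : IsRCCEnvelope T Ω) (H : Subgroup G) : (T ∩ H).ncard ≠ 0 :=
  Set.ncard_ne_zero_of_mem ⟨hT.one_mem, Subgroup.one_mem H⟩

theorem card_sylow_mul_ncard_lt (hT : IsRCCEnvelope T Ω) {A : Sylow p G → Set G}
    (hAT : ∀ P, A P ⊆ T) (hone : ∀ P, 1 ∉ A P)
    (hconj : ∀ g P, ∀ t ∈ A P, g * t * g⁻¹ ∈ A (g • P))
    (hdisj : Pairwise fun P Q ↦ Disjoint (A P) (A Q)) (P : Sylow p G) :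
    Nat.card (Sylow p G) * (A P).ncard < T.ncard :=
  (card_sylow_mul_ncard_le (fun P ↦ Set.subset_sdiff_singleton (hAT P) (hone P)) hconj hdisj
    P).trans_lt (Set.ncard_sdiff_singleton_lt_of_mem hT.one_mem)

theorem card_sylow_mul_ncard_sdiff_lt [∀ P : Sylow p G, IsMulCommutative P]
    (hT : IsRCCEnvelope T Ω)
    (hTI : Pairwise fun P Q : Sylow p G ↦ Disjoint (P : Subgroup G) Q) (P : Sylow p G) :
    Nat.card (Sylow p G) *
      ((T ∩ Subgroup.centralizer (P : Set G)) \ centralizerResidual P).ncard < T.ncard := by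
  have hdvd {P : Sylow p G} {t : G}
      (ht : t ∈ (T ∩ Subgroup.centralizer (P : Set G)) \ centralizerResidual P) :
      p ∣ orderOf t := not_not.mp fun h ↦ ht.2 (mem_centralizerResidual.mpr ⟨ht.1.2, h⟩)
  refine hT.card_sylow_mul_ncard_lt
    (A := fun P ↦ (T ∩ Subgroup.centralizer (P : Set G)) \ centralizerResidual P)
    (fun P t ht ↦ ht.1.1) (fun P h ↦ h.2 (Subgroup.one_mem _)) (fun g P t ht ↦ ?_)
    (fun P Q hPQ ↦ Set.disjoint_left.mpr fun t htP htQ ↦ hPQ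
      (sylow_eq_of_mem_centralizer_of_dvd_orderOf hTI htP.1.2 htQ.1.2 (hdvd htP))) P
  refine ⟨⟨hT.conj_mem g t ht.1.1, conj_mem_centralizer_smul_sylow ht.1.2 g⟩, fun h ↦ ?_⟩
  refine (mem_centralizerResidual.mp h).2 ?_
  rw [← MulAut.conj_apply, MulEquiv.orderOf_eq]
  exact hdvd ht

end IsRCCEnvelope

section DegreeMul

variable {G Ω : Type*} [Group G] [MulAction G Ω] {p q : ℕ} [Fact p.Prime] [Finite G]

theorem ncard_orbit_sylow_of_card_eq_mul [IsPretransitive G Ω] (hΩ : Nat.card Ω = p * q)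
    (hqp : q < p) (P : Sylow p G) (a : Ω) : (orbit (P : Subgroup G) a).ncard = p := by
  have := (Fact.out : p.Prime).pos
  exact ncard_orbit_sylow_eq_prime (hΩ ▸ dvd_mul_right p q) (by rw [hΩ]; nlinarith) P a

variable [FaithfulSMul G Ω]

theorem isMulCommutative_sylow_of_card_eq_mul [IsPretransitive G Ω] (hΩ : Nat.card Ω = p * q)
    (hqp : q < p) (P : Sylow p G) : IsMulCommutative P :=
  isMulCommutative_sylow_of_ncard_orbit_eq (ncard_orbit_sylow_of_card_eq_mul hΩ hqp P)

variable [Nonempty Ω] [IsPreprimitive G Ω]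

theorem nontrivial_sylow_of_card_eq_mul (hΩ : Nat.card Ω = p * q) (hq : 1 < q) (hqp : q < p) :
    Nontrivial (Sylow p G) := by
  obtain ⟨a⟩ := ‹Nonempty Ω›
  obtain ⟨P⟩ : Nonempty (Sylow p G) := inferInstance
  refine nontrivial_sylow_of_ncard_orbit_ne (P := P) (a := a) (fun hbot ↦ ?_) ?_
  · obtain ⟨u, hu, hua⟩ := exists_mem_sylow_smul_ne (ncard_orbit_sylow_of_card_eq_mul hΩ hqp P a)
    obtain rfl : u = 1 := (Subgroup.eq_bot_iff_forall _).mp hbot u hu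
    exact hua (one_smul G a)
  · rw [ncard_orbit_sylow_of_card_eq_mul hΩ hqp P a, hΩ]
    nlinarith

theorem prime_add_one_le_card_sylow_of_card_eq_mul (hΩ : Nat.card Ω = p * q) (hq : 1 < q)
    (hqp : q < p) : p + 1 ≤ Nat.card (Sylow p G) := by
  have := nontrivial_sylow_of_card_eq_mul (G := G) hΩ hq hqp
  exact add_one_le_of_modEq_one (card_sylow_modEq_one p G) Finite.one_lt_card.ne'
    (Fact.out : p.Prime).one_lt

end DegreeMul

namespace IsRCCEnvelope

variable {G Ω : Type*} [Group G] [MulAction G Ω] [FaithfulSMul G Ω] [Finite Ω]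
  [IsPreprimitive G Ω] {T : Set G} {p q : ℕ} [Fact p.Prime] [Finite G]

theorem pairwise_disjoint_sylow (hT : IsRCCEnvelope T Ω)
    (hΩ : Nat.card Ω = p * q) (hq : 1 < q) (hqp : q < p) :
    Pairwise fun P Q : Sylow p G ↦ Disjoint (P : Subgroup G) Q :=
  pairwise_disjoint_sylow_of_ncard_orbit_eq (ncard_orbit_sylow_of_card_eq_mul hΩ hqp) fun _ ↦
    hT.two_mul_ncard_fixedBy_lt (by rw [hΩ]; nlinarith)

variable [Nonempty Ω]

theorem ncard_inter_centralizerResidual_le (hT : IsRCCEnvelope T Ω) (hΩ : Nat.card Ω = p * q)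
    (hqp : q < p) (P : Sylow p G) : (T ∩ centralizerResidual P).ncard ≤ q := by
  have hp : 0 < p := (Fact.out : p.Prime).pos
  have := isMulCommutative_sylow_of_card_eq_mul (q := q) hΩ hqp P
  obtain ⟨a⟩ := ‹Nonempty Ω›
  have h := hT.mul_ncard_inter_centralizerResidual_le (ncard_orbit_sylow_of_card_eq_mul hΩ hqp P)
    Set.finite_univ (a := a) fun _ _ _ _ ↦ Set.mem_univ _
  rw [Set.ncard_univ, hΩ, mul_comm] at h
  exact Nat.le_of_mul_le_mul_left h hp

theorem card_sylow_lt (hT : IsRCCEnvelope T Ω) (hΩ : Nat.card Ω = p * q) (hq : 1 < q)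
    (hqp : q < p) : Nat.card (Sylow p G) < p * q := by
  have hcomm := isMulCommutative_sylow_of_card_eq_mul (G := G) (Ω := Ω) hΩ hqp
  obtain ⟨P⟩ : Nonempty (Sylow p G) := inferInstance
  have hD := hT.card_sylow_mul_ncard_sdiff_lt (hT.pairwise_disjoint_sylow hΩ hq hqp) P
  have hle : p ≤ (T ∩ Subgroup.centralizer (P : Set G)).ncard :=
    Nat.le_of_dvd (hT.ncard_inter_ne_zero _).bot_lt
      (hT.prime_dvd_ncard_inter_centralizer_sylow (ncard_orbit_sylow_of_card_eq_mul hΩ hqp P))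
  have hL := hT.ncard_inter_centralizerResidual_le hΩ hqp P
  have hadd := ncard_inter_centralizerResidual_add_ncard_sdiff T P
  rw [hT.ncard_eq_card, hΩ] at hD
  exact (Nat.le_mul_of_pos_right _ (by lia)).trans_lt hD

theorem card_sylow_eq_prime (hT : IsRCCEnvelope T Ω) (hΩ : Nat.card Ω = p * q) (hq : 1 < q)
    (hqp : q < p) (P : Sylow p G) : Nat.card P = p := by
  have hp : 1 < p := (Fact.out : p.Prime).one_lt
  have := nontrivial_sylow_of_card_eq_mul (G := G) hΩ hq hqp
  obtain ⟨a⟩ := ‹Nonempty Ω›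
  obtain ⟨n, hn⟩ := IsPGroup.iff_card.mp P.2
  have hlt : Nat.card P < p ^ 2 := calc
    Nat.card P < Nat.card (Sylow p G) := card_lt_card_sylow (hT.pairwise_disjoint_sylow hΩ hq hqp) P
    _ < p * q := hT.card_sylow_lt hΩ hq hqp
    _ < p ^ 2 := by nlinarith
  have hle : p ≤ Nat.card P := calc
    p = (Set.range fun u : P ↦ u • a).ncard := (ncard_orbit_sylow_of_card_eq_mul hΩ hqp P a).symm
    _ ≤ Nat.card P := Finite.card_range_le _
  have hn2 : n < 2 := (Nat.pow_lt_pow_iff_right hp).mp (hn ▸ hlt)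
  interval_cases n
  · rw [pow_zero] at hn
    lia
  · rw [hn, pow_one]

theorem ncard_inter_centralizer_eq_prime (hT : IsRCCEnvelope T Ω) (hΩ : Nat.card Ω = p * q)
    (hq : 1 < q) (hqp : q < p) (P : Sylow p G) :
    (T ∩ Subgroup.centralizer (P : Set G)).ncard = p := by
  have hcomm := isMulCommutative_sylow_of_card_eq_mul (G := G) (Ω := Ω) hΩ hqp
  have hm := prime_add_one_le_card_sylow_of_card_eq_mul (G := G) hΩ hq hqp
  have hD := hT.card_sylow_mul_ncard_sdiff_lt (hT.pairwise_disjoint_sylow hΩ hq hqp) P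
  have hL := hT.ncard_inter_centralizerResidual_le hΩ hqp P
  have hadd := ncard_inter_centralizerResidual_add_ncard_sdiff T P
  rw [hT.ncard_eq_card, hΩ] at hD
  refine Nat.eq_of_dvd_of_lt_two_mul (hT.ncard_inter_ne_zero _)
    (hT.prime_dvd_ncard_inter_centralizer_sylow (ncard_orbit_sylow_of_card_eq_mul hΩ hqp P)) ?_
  have hDq : ((T ∩ Subgroup.centralizer (P : Set G)) \ centralizerResidual P).ncard < q := by
    by_contra! hge
    exact hD.not_ge (Nat.mul_le_mul ((Nat.le_succ p).trans hm) hge)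
  lia

theorem card_sylow_mul_prime_sub_lt (hT : IsRCCEnvelope T Ω) (hΩ : Nat.card Ω = p * q)
    (hq : 1 < q) (hqp : q < p) (P : Sylow p G) :
    Nat.card (Sylow p G) * (p - (T ∩ centralizerResidual P).ncard) < p * q := by
  have hcomm := isMulCommutative_sylow_of_card_eq_mul (G := G) (Ω := Ω) hΩ hqp
  have hD := hT.card_sylow_mul_ncard_sdiff_lt (hT.pairwise_disjoint_sylow hΩ hq hqp) P
  rw [hT.ncard_eq_card, hΩ] at hD
  have hsub := Nat.sub_eq_of_eq_add'
    ((hT.ncard_inter_centralizer_eq_prime hΩ hq hqp P).symm.trans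
      (ncard_inter_centralizerResidual_add_ncard_sdiff T P).symm)
  rwa [hsub]

theorem exists_mem_inter_centralizerResidual_ne_one (hT : IsRCCEnvelope T Ω)
    (hΩ : Nat.card Ω = p * q) (hq : 1 < q) (hqp : q < p) (P : Sylow p G) :
    ∃ l ∈ T ∩ centralizerResidual P, l ≠ 1 := by
  refine Set.exists_ne_of_one_lt_ncard ?_ 1
  by_contra! hle
  have hm := prime_add_one_le_card_sylow_of_card_eq_mul (G := G) hΩ hq hqp
  refine (hT.card_sylow_mul_prime_sub_lt hΩ hq hqp P).not_ge ?_
  calc p * q ≤ (p + 1) * (p - 1) := mul_le_add_one_mul_sub_one hqp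
    _ ≤ _ := Nat.mul_le_mul hm (by lia)

theorem card_sylow_ne_prime_add_one (hT : IsRCCEnvelope T Ω) (hΩ : Nat.card Ω = p * q)
    (hq : 1 < q) (hqp : q < p) : Nat.card (Sylow p G) ≠ p + 1 := by
  intro hm
  have := isMulCommutative_sylow_of_card_eq_mul (G := G) (Ω := Ω) hΩ hqp
  have := nontrivial_sylow_of_card_eq_mul (G := G) hΩ hq hqp
  have hTI := hT.pairwise_disjoint_sylow hΩ hq hqp
  obtain ⟨P⟩ : Nonempty (Sylow p G) := inferInstance
  obtain ⟨l, ⟨-, hlK⟩, hl1⟩ := hT.exists_mem_inter_centralizerResidual_ne_one hΩ hq hqp P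
  obtain ⟨hlC, hlp⟩ := mem_centralizerResidual.mp hlK
  obtain ⟨u, hu, hul⟩ := exists_inv_mul_mem_ker_of_card_sylow_eq hTI
    (hm.trans (by rw [hT.card_sylow_eq_prime hΩ hq hqp P])) hlC
  rw [ker_toPermHom_sylow_eq_bot (Ω := Ω) hTI (hΩ ▸ dvd_mul_right p q), Subgroup.mem_bot,
    inv_mul_eq_one] at hul
  have hcop := coprime_orderOf_of_mem_sylow hu hlp
  rw [hul, Nat.coprime_self, orderOf_eq_one_iff] at hcop
  exact hl1 hcop

theorem lt_two_mul_ncard_inter_centralizerResidual (hT : IsRCCEnvelope T Ω)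
    (hΩ : Nat.card Ω = p * q) (hq : 1 < q) (hqp : q < p) (P : Sylow p G) :
    q < 2 * (T ∩ centralizerResidual P).ncard := by
  have hm : 2 * p + 1 ≤ Nat.card (Sylow p G) :=
    two_mul_add_one_le_of_modEq_one (card_sylow_modEq_one p G) <|
      (prime_add_one_le_card_sylow_of_card_eq_mul hΩ hq hqp).lt_of_ne
        (hT.card_sylow_ne_prime_add_one hΩ hq hqp).symm
  by_contra! hle
  refine (hT.card_sylow_mul_prime_sub_lt hΩ hq hqp P).not_ge ?_
  calc p * q ≤ p * (2 * (p - (T ∩ centralizerResidual P).ncard)) :=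
        Nat.mul_le_mul_left p (by lia)
    _ = (2 * p) * (p - (T ∩ centralizerResidual P).ncard) := by ring
    _ ≤ _ := Nat.mul_le_mul_right _ ((Nat.le_succ _).trans hm)

theorem eq_one_of_mem_centralizer_of_smul_eq (hT : IsRCCEnvelope T Ω) (hΩ : Nat.card Ω = p * q)
    (hq : 1 < q) (hqp : q < p) {P : Sylow p G} {y : G} {a : Ω}
    (hy : y ∈ Subgroup.centralizer (P : Set G)) (ha : y • a = a) : y = 1 := by
  have := isMulCommutative_sylow_of_card_eq_mul (G := G) (Ω := Ω) hΩ hqp P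
  have horbit := ncard_orbit_sylow_of_card_eq_mul (Ω := Ω) hΩ hqp P
  let C := Subgroup.centralizer (P : Set G)
  have hcentral : T ∩ C ⊆ Subgroup.centralizer {y} := by
    have hsub : T ∩ Subgroup.centralizer {y} ∩ C ⊆ T ∩ C :=
      Set.inter_subset_inter_left _ Set.inter_subset_left
    have hle : p ≤ (T ∩ Subgroup.centralizer {y} ∩ C).ncard :=
      Nat.le_of_dvd (Nat.pos_of_ne_zero (Set.ncard_ne_zero_of_mem
          ⟨⟨hT.one_mem, Subgroup.one_mem _⟩, Subgroup.one_mem _⟩))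
        (hT.prime_dvd_ncard_inter_centralizer horbit hy ha)
    rw [← Set.eq_of_subset_of_ncard_le hsub
      ((hT.ncard_inter_centralizer_eq_prime hΩ hq hqp P).trans_le hle)]
    exact fun t ht ↦ ht.1.2
  have hfix := hT.mul_ncard_inter_centralizerResidual_le horbit (fixedBy Ω y).toFinite (a := a)
    fun t ht u hu ↦ by
      have hty : Commute t y := Subgroup.mem_centralizer_singleton_iff.mp
        (hcentral ⟨ht.1, centralizerResidual_le_centralizer P ht.2⟩)
      have huy : Commute u y := Subgroup.mem_centralizer_iff.mp hy u hu
      rw [mem_fixedBy, smul_smul u t, smul_smul, ← (huy.mul_left hty).eq, mul_smul _ y, ha]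
  by_contra hy1
  have hlt := hT.two_mul_ncard_fixedBy_lt (by rw [hΩ]; nlinarith) hy1
  have hL := hT.lt_two_mul_ncard_inter_centralizerResidual hΩ hq hqp P
  nlinarith

theorem card_centralizerResidual (hT : IsRCCEnvelope T Ω) (hΩ : Nat.card Ω = p * q)
    (hq : 1 < q) (hqp : q < p) (P : Sylow p G) : Nat.card (centralizerResidual P) = q := by
  have := isMulCommutative_sylow_of_card_eq_mul (G := G) (Ω := Ω) hΩ hqp P
  have hdvd : Nat.card (centralizerResidual P) ∣ q := by
    have hfree (a : Ω) : stabilizer (centralizerResidual P) a = ⊥ :=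
      (Subgroup.eq_bot_iff_forall _).mpr fun y hy ↦ Subtype.ext <|
        hT.eq_one_of_mem_centralizer_of_smul_eq hΩ hq hqp
          (centralizerResidual_le_centralizer P y.2) hy
    refine Nat.Coprime.dvd_of_dvd_mul_left ?_ (hΩ ▸ card_dvd_card_of_stabilizer_eq_bot hfree)
    exact ((Fact.out : p.Prime).coprime_iff_not_dvd.mpr not_dvd_card_centralizerResidual).symm
  refine (Nat.eq_of_dvd_of_lt_two_mul (by lia) hdvd ?_).symm
  calc q < 2 * (T ∩ centralizerResidual P).ncard :=
        hT.lt_two_mul_ncard_inter_centralizerResidual hΩ hq hqp P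
    _ ≤ 2 * Nat.card (centralizerResidual P) :=
        Nat.mul_le_mul_left 2 (Set.ncard_le_ncard Set.inter_subset_right)

theorem normalizer_centralizerResidual_le (hT : IsRCCEnvelope T Ω) (hΩ : Nat.card Ω = p * q)
    (hq : 1 < q) (hqp : q < p) (P : Sylow p G) :
    Subgroup.normalizer (centralizerResidual P : Set G) ≤ Subgroup.normalizer (P : Set G) := by
  have hK := hT.card_centralizerResidual hΩ hq hqp P
  have hnotNormal : Subgroup.normalizer (centralizerResidual P : Set G) ≠ ⊤ := by
    intro htop
    have : (centralizerResidual P).Normal := Subgroup.normalizer_eq_top_iff.mp htop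
    have hbot : centralizerResidual P ≠ ⊥ := fun h ↦ by
      rw [h, Subgroup.card_bot] at hK
      exact hq.ne hK
    have hle := Nat.le_of_dvd (by lia) (hK ▸ hΩ ▸ card_dvd_card_of_normal (Ω := Ω) hbot)
    nlinarith
  refine le_normalizer_sylow_of_card_sylow_lt
    (normalizer_le_normalizer_centralizerResidual P) hnotNormal ?_
  exact (hT.card_sylow_lt hΩ hq hqp).trans (by nlinarith)

theorem sylow_eq_of_mem_centralizer (hT : IsRCCEnvelope T Ω) (hΩ : Nat.card Ω = p * q)
    (hq : q.Prime) (hqp : q < p) {P Q : Sylow p G} {t : G} (ht : t ≠ 1)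
    (htP : t ∈ Subgroup.centralizer (P : Set G)) (htQ : t ∈ Subgroup.centralizer (Q : Set G)) :
    P = Q := by
  by_cases hdvd : p ∣ orderOf t
  · exact sylow_eq_of_mem_centralizer_of_dvd_orderOf
      (hT.pairwise_disjoint_sylow hΩ hq.one_lt hqp) htP htQ hdvd
  have := isMulCommutative_sylow_of_card_eq_mul (G := G) (Ω := Ω) hΩ hqp P
  have htK : t ∈ centralizerResidual P := mem_centralizerResidual.mpr ⟨htP, hdvd⟩
  have hzpowers : Subgroup.zpowers t = centralizerResidual P := by
    have hK := hT.card_centralizerResidual hΩ hq.one_lt hqp P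
    refine Subgroup.eq_of_le_of_card_ge (Subgroup.zpowers_le.mpr htK) ?_
    have hord : orderOf t ∣ q := hK ▸ Subgroup.orderOf_dvd_natCard _ htK
    rw [Nat.card_zpowers, hK, (hq.eq_one_or_self_of_dvd _ hord).resolve_left
      (mt orderOf_eq_one_iff.mp ht)]
  refine (sylow_eq_of_le_normalizer fun u hu ↦ ?_).symm
  refine hT.normalizer_centralizerResidual_le hΩ hq.one_lt hqp P
    (Subgroup.centralizer_le_normalizer _ ?_)
  rw [← hzpowers, Subgroup.zpowers_eq_closure, Subgroup.centralizer_closure]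
  exact Subgroup.mem_centralizer_singleton_iff.mpr (Subgroup.mem_centralizer_iff.mp htQ u hu)

end IsRCCEnvelope

theorem IsRCCEnvelope.not_isPreprimitive {G Ω : Type*} [Group G] [MulAction G Ω] [Finite G]
    [FaithfulSMul G Ω] {T : Set G} {p q : ℕ} [Fact p.Prime] (hT : IsRCCEnvelope T Ω)
    (hΩ : Nat.card Ω = p * q) (hq : q.Prime) (hqp : q < p) : ¬ IsPreprimitive G Ω := by
  intro _
  have hp : 0 < p := (Fact.out : p.Prime).pos
  obtain ⟨hne, _⟩ := Nat.card_ne_zero.mp (hΩ ▸ (Nat.mul_pos hp hq.pos).ne')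
  obtain ⟨P⟩ : Nonempty (Sylow p G) := inferInstance
  have hm := prime_add_one_le_card_sylow_of_card_eq_mul (G := G) hΩ hq.one_lt hqp
  have hlt := hT.card_sylow_mul_ncard_lt
    (A := fun P ↦ (T ∩ Subgroup.centralizer (P : Set G)) \ {1})
    (fun P t ht ↦ ht.1.1) (fun P h ↦ h.2 rfl)
    (fun g P t ht ↦ ⟨⟨hT.conj_mem g t ht.1.1, conj_mem_centralizer_smul_sylow ht.1.2 g⟩,
      mt conj_eq_one_iff.mp ht.2⟩)
    (fun P Q hPQ ↦ Set.disjoint_left.mpr fun t htP htQ ↦ hPQ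
      (hT.sylow_eq_of_mem_centralizer hΩ hq hqp htP.2 htP.1.2 htQ.1.2)) P
  have hone : 1 ∈ T ∩ Subgroup.centralizer (P : Set G) := ⟨hT.one_mem, Subgroup.one_mem _⟩
  rw [Set.ncard_sdiff_singleton_of_mem hone,
    hT.ncard_inter_centralizer_eq_prime hΩ hq.one_lt hqp P, hT.ncard_eq_card, hΩ] at hlt
  refine hlt.not_ge ?_
  calc p * q ≤ (p + 1) * (p - 1) := mul_le_add_one_mul_sub_one hqp
    _ ≤ _ := Nat.mul_le_mul_right _ hm

section LoopFolder

variable {G : Type*} [Group G] {H : Subgroup G} {T : Set G}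

theorem smul_mk_eq_mk_iff {t a b : G} : t • (a : G ⧸ H) = b ↔ b⁻¹ * t * a ∈ H := by
  rw [Quotient.smul_coe, eq_comm, QuotientGroup.eq, smul_eq_mul, mul_assoc]

theorem IsLoopFolder.isRCCEnvelope (hLF : IsLoopFolder H T) (hRCC : IsRCC T)
    (hgen : Subgroup.closure T = ⊤) : IsRCCEnvelope T (G ⧸ H) where
  one_mem := hLF.1
  conj_mem g t ht := by simpa only [inv_inv] using hRCC t ht g⁻¹
  closure_eq_top := hgen
  existsUnique_smul_eq a b := by
    induction a using QuotientGroup.induction_on with | _ a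
    induction b using QuotientGroup.induction_on with | _ b
    refine (existsUnique_congr fun t ↦ and_congr_right fun _ ↦ ?_).mp (hLF.2 b⁻¹ (b * a⁻¹))
    rw [smul_mk_eq_mk_iff, ← inv_mem_iff]
    group

theorem IsFaithfulFolder.faithfulSMul (hH : IsFaithfulFolder H) : FaithfulSMul G (G ⧸ H) where
  eq_of_smul_eq_smul {x y} hxy := by
    refine inv_mul_eq_one.mp (hH _ fun g ↦ ?_)
    have h : (x⁻¹ * y) • ((g⁻¹ : G) : G ⧸ H) = (g⁻¹ : G) := by
      rw [mul_smul, ← hxy, inv_smul_smul]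
    rwa [smul_mk_eq_mk_iff, inv_inv] at h

theorem isPreprimitive_quotient_of_isCoatom (hH : IsCoatom H) : IsPreprimitive G (G ⧸ H) := by
  have : Nontrivial (G ⧸ H) := QuotientGroup.nontrivial_iff.mpr hH.1
  rwa [← isCoatom_stabilizer_iff_preprimitive G ((1 : G) : G ⧸ H), stabilizer_quotient]

theorem IsLoopFolder.not_isCoatom_of_lt [Finite G] {p q : ℕ} (hp : p.Prime) (hq : q.Prime)
    (hqp : q < p) (hLF : IsLoopFolder H T) (hRCC : IsRCC T) (hH : IsFaithfulFolder H)
    (hT : Nat.card T = p * q) (hgen : Subgroup.closure T = ⊤) : ¬ IsCoatom H := by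
  have : Fact p.Prime := ⟨hp⟩
  have := hH.faithfulSMul
  have hEnv := hLF.isRCCEnvelope hRCC hgen
  have hcard : Nat.card (G ⧸ H) = p * q := by
    rw [← hEnv.ncard_eq_card, ← Nat.card_coe_set_eq, hT]
  exact fun h ↦ hEnv.not_isPreprimitive hcard hq hqp (isPreprimitive_quotient_of_isCoatom h)

theorem IsFaithfulFolder.ne_top (hH : IsFaithfulFolder H) [Nontrivial G] : H ≠ ⊤ := by
  rintro rfl
  obtain ⟨x, hx⟩ := exists_ne (1 : G)
  exact hx (hH x fun _ ↦ Subgroup.mem_top _)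

end LoopFolder

/-- Theorem (Imprimitivity): the envelope of an RCC loop of order `pq`, for distinct primes
`p` and `q`, acts imprimitively on the cosets of `H`; i.e. `H` is not maximal in `G`. -/
theorem stmt_0 {G : Type*} [Group G] [Finite G] (p q : ℕ) (hp : p.Prime) (hq : q.Prime)
    (hpq : p ≠ q) (H : Subgroup G) (T : Set G)
    (hLF : IsLoopFolder H T) (hRCC : IsRCC T) (hFaith : IsFaithfulFolder H)
    (hord : Nat.card T = p * q) (hgen : Subgroup.closure T = ⊤) :
    ∃ K : Subgroup G, H < K ∧ K < ⊤ := by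
  have hH : ¬ IsCoatom H := by
    obtain h | h := lt_or_gt_of_ne hpq
    · exact hLF.not_isCoatom_of_lt hq hp h hRCC hFaith (hord.trans (mul_comm p q)) hgen
    · exact hLF.not_isCoatom_of_lt hp hq h hRCC hFaith hord hgen
  have : Nontrivial T := Finite.one_lt_card_iff_nontrivial.mp
    (hord ▸ Nat.one_lt_mul_iff.mpr ⟨hp.pos, hq.pos, .inl hp.one_lt⟩)
  have : Nontrivial G := Subtype.val_injective.nontrivial (α := T)
  by_contra! hK
  exact hH ⟨hFaith.ne_top, fun K hHK ↦ not_lt_top_iff.mp (hK K hHK)⟩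
end

section
/- (Drápal's theorem.) Let p be a prime and let (G, H, T) be a faithful RCC loop folder of order p with ⟨T⟩ = G (i.e., the envelope of an RCC loop of order p). Then H is the trivial subgroup; consequently T = G and G is a group of order p, so every RCC loop of prime order is a group. -/
/-!
`G` acts on `T \ {1}` by conjugation, and the kernel of this action is the centre of `G` because
`T` generates `G`. Hence the index of the centre divides `(p - 1)!`, while `H`, having the
transversal `T`, has index `p`. The indices being coprime, `G = H * Z(G)`, so `H` is normal, and
faithfulness makes it trivial.
-/

open scoped Nat

section Subgroups

variable {G : Type*} [Group G]

theorem sup_eq_top_of_coprime_index {H K : Subgroup G} (hHK : H.index.Coprime K.index) :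
    H ⊔ K = ⊤ :=
  Subgroup.index_eq_one.mp <| Nat.eq_one_of_dvd_coprimes hHK
    (Subgroup.index_dvd_of_le le_sup_left) (Subgroup.index_dvd_of_le le_sup_right)

theorem normal_of_sup_center_eq_top {H : Subgroup G} (hH : H ⊔ Subgroup.center G = ⊤) :
    H.Normal := by
  rw [← Subgroup.normalizer_eq_top_iff, eq_top_iff, ← hH]
  exact sup_le Subgroup.le_normalizer (Subgroup.center_le_normalizer _)

end Subgroups

namespace IsRCC

variable {G : Type*} [Group G] {S T : Set G}

/-- The conjugation action of `G` on a conjugation-invariant set, as a permutation representation;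
`g` acts by `s ↦ g * s * g⁻¹`, so that this is a homomorphism. -/
def conjPerm (hS : IsRCC S) : G →* Equiv.Perm S :=
  let invariantSet : SubMulAction (ConjAct G) G :=
    { carrier := S
      smul_mem' := fun g s hs => by
        simpa [ConjAct.smul_def] using hS s hs (ConjAct.ofConjAct g)⁻¹ }
  (MulAction.toPermHom (ConjAct G) invariantSet).comp ConjAct.toConjAct.toMonoidHom

theorem coe_conjPerm_apply (hS : IsRCC S) (g : G) (s : S) :
    (hS.conjPerm g s : G) = g * s * g⁻¹ :=
  rfl

theorem ker_conjPerm (hS : IsRCC S) : hS.conjPerm.ker = Subgroup.centralizer S := by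
  ext g
  simp only [MonoidHom.mem_ker, Equiv.ext_iff, Subtype.ext_iff, Subtype.forall,
    coe_conjPerm_apply, Equiv.Perm.one_apply, mul_inv_eq_iff_eq_mul,
    Subgroup.mem_centralizer_iff]
  exact forall₂_congr fun _ _ => eq_comm

theorem index_centralizer_dvd (hS : IsRCC S) (hfin : S.Finite) :
    (Subgroup.centralizer S).index ∣ (S.ncard)! := by
  have := hfin.to_subtype
  rw [← hS.ker_conjPerm, Subgroup.index_ker, ← Nat.card_coe_set_eq, ← Nat.card_perm]
  exact Subgroup.card_subgroup_dvd_card _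

theorem sdiff_one (hT : IsRCC T) : IsRCC (T \ {1}) := by
  rintro t ⟨ht, ht1⟩ g
  refine ⟨hT t ht g, fun h => ht1 ?_⟩
  rwa [Set.mem_singleton_iff, mul_assoc, inv_mul_eq_one, right_eq_mul] at h

theorem index_center_dvd (hT : IsRCC T) (hfin : T.Finite) (h1 : 1 ∈ T)
    (hgen : Subgroup.closure T = ⊤) :
    (Subgroup.center G).index ∣ (T.ncard - 1)! := by
  have hcenter : Subgroup.centralizer (T \ {1}) = Subgroup.center G := by
    rw [← Subgroup.centralizer_closure, Subgroup.closure_sdiff_one, hgen, Subgroup.coe_top,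
      Subgroup.centralizer_univ]
  rw [← hcenter, ← Set.ncard_sdiff_singleton_of_mem h1]
  exact hT.sdiff_one.index_centralizer_dvd hfin.sdiff

end IsRCC

section LoopFolders

variable {G : Type*} [Group G] {H : Subgroup G} {T : Set G}

theorem IsLoopFolder.isComplement (hLF : IsLoopFolder H T) :
    Subgroup.IsComplement (H : Set G) T := by
  rw [Subgroup.isComplement_iff_existsUnique_mul_inv_mem]
  intro x
  obtain ⟨t, ⟨ht, hxt⟩, huniq⟩ := hLF.2 1 x
  refine ⟨⟨t, ht⟩, by simpa using hxt, fun s hxs => Subtype.ext <| huniq s ⟨s.2, ?_⟩⟩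
  simpa using hxs

theorem IsLoopFolder.normal_of_prime_card (hLF : IsLoopFolder H T) (hRCC : IsRCC T)
    (hgen : Subgroup.closure T = ⊤) (hT : T.ncard.Prime) : H.Normal := by
  have hcenter : (Subgroup.center G).index ∣ (T.ncard - 1)! :=
    hRCC.index_center_dvd (Set.finite_of_ncard_pos hT.pos) hLF.1 hgen
  have hcoprime : H.index.Coprime (Subgroup.center G).index := by
    rw [← hLF.isComplement.ncard_right]
    exact (hT.coprime_factorial_of_lt (Nat.pred_lt hT.ne_zero)).coprime_dvd_right hcenter
  exact normal_of_sup_center_eq_top (sup_eq_top_of_coprime_index hcoprime)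

theorem IsFaithfulFolder.eq_bot_of_normal (hFaith : IsFaithfulFolder H) (hH : H.Normal) :
    H = ⊥ :=
  H.eq_bot_iff_forall.mpr fun x hx => hFaith x (hH.conj_mem x hx)

end LoopFolders

theorem stmt_1_general {G : Type*} [Group G] (p : ℕ) (hp : p.Prime)
    (H : Subgroup G) (T : Set G)
    (hLF : IsLoopFolder H T) (hRCC : IsRCC T) (hFaith : IsFaithfulFolder H)
    (hord : Nat.card T = p) (hgen : Subgroup.closure T = ⊤) :
    H = ⊥ ∧ T = Set.univ ∧ Nat.card G = p := by
  have hprime : T.ncard.Prime := by rwa [← Nat.card_coe_set_eq, hord]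
  have hbot : H = ⊥ := hFaith.eq_bot_of_normal (hLF.normal_of_prime_card hRCC hgen hprime)
  have huniv : T = Set.univ := by
    have hcompl := hLF.isComplement
    rwa [hbot, Subgroup.coe_bot, Subgroup.isComplement_singleton_left] at hcompl
  exact ⟨hbot, huniv, by rw [← hord, huniv, Nat.card_univ]⟩

/-- Drápal's theorem: if `(G, H, T)` is the envelope of an RCC loop of prime order `p`,
then `H` is trivial; consequently `T = G` and `G` has order `p`. -/
theorem stmt_1 {G : Type*} [Group G] [Finite G] (p : ℕ) (hp : p.Prime)
    (H : Subgroup G) (T : Set G)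
    (hLF : IsLoopFolder H T) (hRCC : IsRCC T) (hFaith : IsFaithfulFolder H)
    (hord : Nat.card T = p) (hgen : Subgroup.closure T = ⊤) :
    H = ⊥ ∧ T = Set.univ ∧ Nat.card G = p :=
  stmt_1_general p hp H T hLF hRCC hFaith hord hgen
end

section
/- Let n, d, e, f be positive integers with d dividing n and gcd(e, n/d) = 1, and let ζ ∈ S_n be an n-cycle. Then I_{n,de} = I_{n,d} and I_{n,f} = I_{n,gcd(n,f)}. Moreover, I_{n,d} = Σ_{k=0}^{⌊d/2⌋} d!·(n/d)^k·c^{d−2k} / (2^k·k!·(d−2k)!), where c = 2 if n/d is even and c = 1 if n/d is odd. In particular, I_n = Σ_{k=0}^{⌊n/2⌋} n! / (2^k·k!·(n−2k)!). -/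
/-- The standard `n`-cycle `x ↦ x + 1` on `ℤ/nℤ`. -/
def stdCycle (n : ℕ) : Equiv.Perm (ZMod n) := Equiv.addRight (1 : ZMod n)

/-- `I_{n,d}`: the number of `τ ∈ S_n` with `τ² = 1` commuting with `ζ^d`, where `ζ` is the
standard `n`-cycle (one more than the number of involutions in the centralizer of `ζ^d`). -/
noncomputable def Icd (n d : ℕ) : ℕ :=
  Nat.card {τ : Equiv.Perm (ZMod n) // τ ^ 2 = 1 ∧ Commute τ (stdCycle n ^ d)}

/-! Writing a residue modulo `n = d * m` as `i + d * y` with `i < d` and `y ∈ ℤ/m` turns the `d`-th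
power of the standard cycle into the translation `(i, y) ↦ (i, y + 1)`. Its centralizer is a wreath
product: the commuting permutations are the maps `(i, y) ↦ (σ i, a i + y)`, and such a map is an
involution exactly when `σ² = 1` and `a (σ i) = -a i`. If `σ` has `k` transpositions, then `a` is
free on one point of each of them and `2`-torsion at the `d - 2 * k` fixed points of `σ`; it remains
to sum over the involutions `σ`, of which `d! / (2 ^ k * k! * (d - 2 * k)!)` have `k`
transpositions. -/

open Finset Equiv
open scoped Nat

section Centralizers

theorem commute_pow_gcd_iff {G : Type*} [Group G] {a g : G} {n : ℕ} (hg : g ^ n = 1) (f : ℕ) :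
    Commute a (g ^ n.gcd f) ↔ Commute a (g ^ f) := by
  constructor
  · obtain ⟨c, hc⟩ := n.gcd_dvd_right f
    intro h
    rw [hc, pow_mul]
    exact h.pow_right c
  · intro h
    have bezout : g ^ n.gcd f = (g ^ f) ^ n.gcdB f := by
      rw [← zpow_natCast, Nat.gcd_eq_gcd_ab, zpow_add, zpow_mul, zpow_mul, zpow_natCast,
        zpow_natCast, hg, one_zpow, one_mul]
    exact bezout ▸ h.zpow_right _

theorem card_sq_eq_one_commute_congr {M N : Type*} [Monoid M] [Monoid N] (e : M ≃* N) (g : M) :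
    Nat.card {x : M // x ^ 2 = 1 ∧ Commute x g} =
      Nat.card {y : N // y ^ 2 = 1 ∧ Commute y (e g)} :=
  Nat.card_congr <| e.toEquiv.subtypeEquiv fun x => and_congr
    (by simp [← map_pow])
    ⟨fun h => h.map e, fun h => h.of_map e.injective⟩

end Centralizers

section Involutions

variable {ι : Type*} [Fintype ι] [DecidableEq ι]

theorem cycleType_eq_replicate_two_iff {σ : Perm ι} {k : ℕ} :
    σ.cycleType = Multiset.replicate k 2 ↔ σ ^ 2 = 1 ∧ σ.cycleType.card = k := by
  rw [Perm.pow_prime_eq_one_iff, Multiset.eq_replicate, and_comm]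

theorem two_mul_card_cycleType_le {σ : Perm ι} (hσ : σ ^ 2 = 1) :
    2 * σ.cycleType.card ≤ Fintype.card ι := by
  have hsum := σ.sum_cycleType_le
  rw [Perm.cycleType_of_pow_prime_eq_one hσ, Multiset.sum_replicate, smul_eq_mul] at hsum
  lia

theorem card_cycleType_eq_replicate_two_mul {k : ℕ} (hk : 2 * k ≤ Fintype.card ι) :
    #{σ : Perm ι | σ.cycleType = Multiset.replicate k 2} *
      (2 ^ k * k ! * (Fintype.card ι - 2 * k)!) = (Fintype.card ι)! := by
  have hprod : ∏ c ∈ (Multiset.replicate k 2).toFinset, ((Multiset.replicate k 2).count c)! =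
      k ! := by
    rcases eq_or_ne k 0 with rfl | hk₀
    · simp
    · simp [Multiset.toFinset_replicate, hk₀]
  have hcount := Perm.card_of_cycleType_mul_eq ι (Multiset.replicate k 2)
  rw [hprod, Multiset.sum_replicate, Multiset.prod_replicate, smul_eq_mul, mul_comm k 2,
    if_pos ⟨hk, fun c hc => (Multiset.eq_of_mem_replicate hc).ge⟩] at hcount
  rw [← hcount]
  ring

theorem sum_sq_eq_one_card_cycleType (w : ℕ → ℕ) :
    ∑ σ : Perm ι with σ ^ 2 = 1, w σ.cycleType.card =
      ∑ k ∈ range (Fintype.card ι / 2 + 1),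
        (Fintype.card ι)! * w k / (2 ^ k * k ! * (Fintype.card ι - 2 * k)!) := by
  have hmaps : ∀ σ ∈ ({σ : Perm ι | σ ^ 2 = 1} : Finset _),
      σ.cycleType.card ∈ range (Fintype.card ι / 2 + 1) := fun σ hσ => by
    have := two_mul_card_cycleType_le (mem_filter.1 hσ).2
    rw [mem_range]
    lia
  rw [← sum_fiberwise_of_maps_to' hmaps]
  refine sum_congr rfl fun k hk => ?_
  rw [sum_const, smul_eq_mul, filter_filter]
  simp only [← cycleType_eq_replicate_two_iff]
  refine (Nat.div_eq_of_eq_mul_left (by positivity) ?_).symm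
  rw [← card_cycleType_eq_replicate_two_mul (ι := ι) (k := k) (by have := mem_range.1 hk; lia)]
  ring

end Involutions

section SkewFunctions

variable {ι G : Type*} {σ : Perm ι}

theorem sq_eq_one_iff_involutive : σ ^ 2 = 1 ↔ Function.Involutive σ := by
  simp [Perm.ext_iff, pow_two, Function.Involutive]

theorem two_mul_card_lt_apply_add_card_fixedPoints [LinearOrder ι] [Finite ι]
    (hσ : Function.Involutive σ) :
    2 * Nat.card {i // i < σ i} + Nat.card {i // σ i = i} = Nat.card ι := by
  have hswap : Nat.card {i // i < σ i} = Nat.card {i // σ i < i} :=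
    Nat.card_congr <| σ.subtypeEquiv fun i => by rw [hσ i]
  have := Fintype.ofFinite ι
  rw [two_mul]
  nth_rewrite 2 [hswap]
  simp only [Nat.card_eq_fintype_card, Fintype.card_subtype, card_filter, ← sum_add_distrib]
  rw [Fintype.card_eq_sum_ones]
  refine sum_congr rfl fun i _ => ?_
  rcases lt_trichotomy i (σ i) with h | h | h
  · simp [h, h.ne', h.not_gt]
  · simp [← h]
  · simp [h, h.ne, h.not_gt]

variable [AddGroup G]

/-- A function with `a (σ i) = -a i` is determined by its values on one point of each transposition
of `σ`, here the smaller one, and by its values at the fixed points, which must be `2`-torsion. -/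
def skewFunctionsEquiv [LinearOrder ι] (hσ : Function.Involutive σ) :
    {a : ι → G // ∀ i, a (σ i) = -a i} ≃
      ({i // σ i = i} → {x : G // x = -x}) × ({i // i < σ i} → G) where
  toFun a := (fun i => ⟨a.1 i, by simpa only [i.2] using a.2 i⟩, fun i => a.1 i)
  invFun uv := ⟨fun i => if hfix : σ i = i then uv.1 ⟨i, hfix⟩
      else if hlt : i < σ i then uv.2 ⟨i, hlt⟩
      else -uv.2 ⟨σ i, by rw [hσ i]; exact lt_of_le_of_ne (not_lt.1 hlt) hfix⟩, fun i => by
    rcases lt_trichotomy i (σ i) with h | h | h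
    · simp [hσ i, h, h.ne, h.ne', h.not_gt]
    · simpa [← h] using (uv.1 ⟨i, h.symm⟩).2
    · simp [hσ i, h, h.ne, h.ne', h.not_gt]⟩
  left_inv a := by
    ext i
    rcases lt_trichotomy i (σ i) with h | h | h
    · simp [h, h.ne']
    · simp [← h]
    · simp [h.ne, h.not_gt, a.2 i]
  right_inv uv := by
    ext i
    · simp [i.2]
    · simp [i.2, i.2.ne']

theorem card_skewFunctions [Fintype ι] [DecidableEq ι] (hσ : σ ^ 2 = 1) :
    Nat.card {a : ι → G // ∀ i, a (σ i) = -a i} =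
      Nat.card G ^ σ.cycleType.card *
        Nat.card {x : G // x = -x} ^ (Fintype.card ι - 2 * σ.cycleType.card) := by
  have hinv := sq_eq_one_iff_involutive.1 hσ
  have hle := two_mul_card_cycleType_le hσ
  have hfix : Nat.card {i // σ i = i} = Fintype.card ι - 2 * σ.cycleType.card := by
    have := σ.card_fixedPoints
    rw [Perm.cycleType_of_pow_prime_eq_one hσ, Multiset.sum_replicate, smul_eq_mul, mul_comm,
      ← Nat.card_eq_fintype_card] at this
    exact this
  generalize σ.cycleType.card = k at *
  obtain ⟨_, -⟩ := exists_wellFoundedLT ι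
  have hlt : Nat.card {i // i < σ i} = k := by
    have := two_mul_card_lt_apply_add_card_fixedPoints hinv
    rw [hfix, Nat.card_eq_fintype_card (α := ι)] at this
    lia
  rw [Nat.card_congr (skewFunctionsEquiv hinv), Nat.card_prod, Nat.card_fun, Nat.card_fun, hfix,
    hlt, mul_comm]

end SkewFunctions

section Wreath

variable {ι G : Type*} [AddGroup G]

/-- The right translation `(i, x) ↦ (i, x + y)` of `ι × G`, a disjoint union of copies of the
possibly noncommutative group `G`. For `G = ℤ/m` and `y = 1` it is a product of `m`-cycles, one for
each `i : ι`. -/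
def rightTranslation (ι : Type*) (y : G) : Perm (ι × G) :=
  (Equiv.refl ι).prodCongr (Equiv.addRight y)

@[simp]
theorem rightTranslation_apply (y : G) (p : ι × G) : rightTranslation ι y p = (p.1, p.2 + y) := rfl

theorem rightTranslation_nsmul (n : ℕ) (y : G) :
    rightTranslation ι (n • y) = rightTranslation ι y ^ n := by
  induction n with
  | zero => ext1 p; simp
  | succ n ih => ext1 p; simp [pow_succ', ← ih, succ_nsmul, add_assoc]

/-- The element `(i, x) ↦ (σ i, a i + x)` of the wreath product of `G` with `Perm ι`. Adding `a i`
on the left makes it commute with the right translations. -/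
def wreathPerm (σ : Perm ι) (a : ι → G) : Perm (ι × G) :=
  σ.prodShear fun i => Equiv.addLeft (a i)

@[simp]
theorem wreathPerm_apply (σ : Perm ι) (a : ι → G) (p : ι × G) :
    wreathPerm σ a p = (σ p.1, a p.1 + p.2) := rfl

theorem wreathPerm_injective :
    Function.Injective fun s : Perm ι × (ι → G) => wreathPerm s.1 s.2 := by
  rintro ⟨σ, a⟩ ⟨ρ, b⟩ h
  have hvalue (i : ι) : σ i = ρ i ∧ a i = b i := by
    simpa using DFunLike.congr_fun h (i, 0)
  exact Prod.ext (Equiv.ext fun i => (hvalue i).1) (funext fun i => (hvalue i).2)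

theorem apply_of_commute_rightTranslation {τ : Perm (ι × G)}
    (hτ : ∀ y, Commute τ (rightTranslation ι y)) (i : ι) (x : G) :
    τ (i, x) = ((τ (i, 0)).1, (τ (i, 0)).2 + x) := by
  simpa using DFunLike.congr_fun (hτ x).eq (i, 0)

theorem forall_commute_rightTranslation_iff {τ : Perm (ι × G)} :
    (∀ y, Commute τ (rightTranslation ι y)) ↔ ∃ σ a, wreathPerm σ a = τ := by
  constructor
  · intro hτ
    have apply_fst_eq {ρ : Perm (ι × G)} (hρ : ∀ y, Commute ρ (rightTranslation ι y)) (p : ι × G) :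
        (ρ (p.1, 0)).1 = (ρ p).1 := by
      rw [apply_of_commute_rightTranslation hρ p.1 p.2]
    refine ⟨⟨fun i => (τ (i, 0)).1, fun i => (τ⁻¹ (i, 0)).1, fun i => ?_, fun i => ?_⟩,
      fun i => (τ (i, 0)).2, ?_⟩
    · exact (apply_fst_eq (fun y => (hτ y).inv_left) (τ (i, 0))).trans (by simp)
    · exact (apply_fst_eq hτ (τ⁻¹ (i, 0))).trans (by simp)
    · ext1 ⟨i, x⟩
      exact (apply_of_commute_rightTranslation hτ i x).symm
  · rintro ⟨σ, a, rfl⟩ y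
    ext1 p
    simp [add_assoc]

theorem wreathPerm_sq_eq_one_iff {σ : Perm ι} {a : ι → G} :
    wreathPerm σ a ^ 2 = 1 ↔ σ ^ 2 = 1 ∧ ∀ i, a (σ i) = -a i := by
  simp only [sq_eq_one_iff_involutive, Function.Involutive, Prod.forall, wreathPerm_apply,
    Prod.mk.injEq, ← add_assoc, add_eq_right, ← eq_neg_iff_add_eq_zero, forall_and, forall_const]

/-- The involutions commuting with all right translations, in wreath product coordinates. -/
noncomputable def equivariantInvolutionsEquiv :
    {τ : Perm (ι × G) // τ ^ 2 = 1 ∧ ∀ y, Commute τ (rightTranslation ι y)} ≃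
      Σ σ : {σ : Perm ι // σ ^ 2 = 1}, {a : ι → G // ∀ i, a (σ.1 i) = -a i} :=
  (Equiv.ofBijective
    (fun s => ⟨wreathPerm s.1.1 s.2.1, wreathPerm_sq_eq_one_iff.2 ⟨s.1.2, s.2.2⟩,
      forall_commute_rightTranslation_iff.2 ⟨_, _, rfl⟩⟩)
    ⟨by
      rintro ⟨⟨σ, hσ⟩, a, ha⟩ ⟨⟨ρ, hρ⟩, b, hb⟩ h
      obtain ⟨rfl, rfl⟩ := Prod.mk.inj (wreathPerm_injective (Subtype.ext_iff.1 h))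
      rfl, by
      rintro ⟨τ, hsq, hcomm⟩
      obtain ⟨σ, a, rfl⟩ := forall_commute_rightTranslation_iff.1 hcomm
      obtain ⟨hσ, ha⟩ := wreathPerm_sq_eq_one_iff.1 hsq
      exact ⟨⟨⟨σ, hσ⟩, a, ha⟩, rfl⟩⟩).symm

theorem card_equivariantInvolutions [Fintype ι] [Finite G] :
    Nat.card {τ : Perm (ι × G) // τ ^ 2 = 1 ∧ ∀ y, Commute τ (rightTranslation ι y)} =
      ∑ k ∈ range (Fintype.card ι / 2 + 1),
        (Fintype.card ι)! *
            (Nat.card G ^ k * Nat.card {x : G // x = -x} ^ (Fintype.card ι - 2 * k)) /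
          (2 ^ k * k ! * (Fintype.card ι - 2 * k)!) := by
  classical
  rw [← sum_sq_eq_one_card_cycleType
      fun k => Nat.card G ^ k * Nat.card {x : G // x = -x} ^ (Fintype.card ι - 2 * k),
    Nat.card_congr equivariantInvolutionsEquiv, Nat.card_sigma,
    sum_subtype _ fun σ : Perm ι => mem_filter_univ σ]
  exact sum_congr rfl fun σ _ => card_skewFunctions σ.2

end Wreath

section ZMod

theorem card_eq_neg_self (G : Type*) [AddCommGroup G] [IsAddCyclic G] [Finite G] :
    Nat.card {x : G // x = -x} = if Nat.card G % 2 = 0 then 2 else 1 := by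
  have hker : Nat.card {x : G // x = -x} = (Nat.card G).gcd 2 := by
    rw [← IsAddCyclic.card_nsmulAddMonoidHom_ker]
    exact Nat.card_congr <| Equiv.subtypeEquivRight fun x => by
      simp [AddMonoidHom.mem_ker, two_nsmul, eq_neg_iff_add_eq_zero]
  rw [hker, Nat.gcd_comm, Nat.gcd_rec]
  rcases Nat.mod_two_eq_zero_or_one (Nat.card G) with h | h <;> simp [h]

theorem commute_rightTranslation_one_iff {ι : Type*} {m : ℕ} [NeZero m] {τ : Perm (ι × ZMod m)} :
    Commute τ (rightTranslation ι 1) ↔ ∀ y, Commute τ (rightTranslation ι y) := by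
  refine ⟨fun h y => ?_, fun h => h 1⟩
  rw [← ZMod.natCast_zmod_val y, ← nsmul_one, rightTranslation_nsmul]
  exact h.pow_right y.val

theorem stdCycle_pow (n k : ℕ) : stdCycle n ^ k = Equiv.addRight (k : ZMod n) := by
  simp [stdCycle]

theorem Icd_gcd (n f : ℕ) : Icd n f = Icd n (n.gcd f) := by
  have hcycle : stdCycle n ^ n = 1 := by simp [stdCycle_pow]
  simp only [Icd, commute_pow_gcd_iff hcycle]

theorem bijective_add_mul_val (d m : ℕ) [NeZero d] [NeZero m] :
    Function.Bijective fun p : Fin d × ZMod m => ((p.1 + d * p.2.val : ℕ) : ZMod (d * m)) := by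
  refine (Fintype.bijective_iff_surjective_and_card _).2 ⟨fun x => ?_, by simp [ZMod.card]⟩
  have hdiv : x.val / d < m := Nat.div_lt_of_lt_mul x.val_lt
  refine ⟨(Fin.ofNat d x.val, (x.val / d : ℕ)), ?_⟩
  simp only [Fin.val_ofNat, ZMod.val_natCast_of_lt hdiv, Nat.mod_add_div, ZMod.natCast_zmod_val]

/-- The bijection `(i, y) ↦ i + d * y`, for `0 ≤ i < d`, sorting the elements of `ℤ/dm` by their
residue modulo `d`; it conjugates the `d`-th power of the standard cycle into a translation. -/
noncomputable def residueEquiv (d m : ℕ) [NeZero d] [NeZero m] : Fin d × ZMod m ≃ ZMod (d * m) :=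
  Equiv.ofBijective _ (bijective_add_mul_val d m)

theorem residueEquiv_add_one (d m : ℕ) [NeZero d] [NeZero m] (i : Fin d) (y : ZMod m) :
    residueEquiv d m (i, y + 1) = residueEquiv d m (i, y) + d := by
  have hval : (y + 1).val ≡ y.val + 1 [MOD m] := by
    simp [← ZMod.natCast_eq_natCast_iff]
  have hcast : ((d * (y + 1).val : ℕ) : ZMod (d * m)) = (d * y.val : ℕ) + d := by
    rw [(ZMod.natCast_eq_natCast_iff _ _ _).2 (hval.mul_left' d), mul_add_one, Nat.cast_add]
  simp only [residueEquiv, Equiv.ofBijective_apply]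
  rw [Nat.cast_add, Nat.cast_add, hcast, add_assoc]

theorem permCongrHom_residueEquiv_rightTranslation (d m : ℕ) [NeZero d] [NeZero m] :
    (residueEquiv d m).permCongrHom (rightTranslation (Fin d) 1) = stdCycle (d * m) ^ d := by
  ext1 x
  obtain ⟨⟨i, y⟩, rfl⟩ := (residueEquiv d m).surjective x
  simp [Equiv.permCongrHom, stdCycle_pow, residueEquiv_add_one]

theorem Icd_mul_left_eq_card_equivariantInvolutions (d m : ℕ) [NeZero d] [NeZero m] :
    Icd (d * m) d = Nat.card {τ : Perm (Fin d × ZMod m) //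
      τ ^ 2 = 1 ∧ ∀ y, Commute τ (rightTranslation (Fin d) y)} := by
  simp only [Icd, ← permCongrHom_residueEquiv_rightTranslation, ← card_sq_eq_one_commute_congr,
    commute_rightTranslation_one_iff]

theorem Icd_mul_left_eq_sum (d m : ℕ) [NeZero d] [NeZero m] :
    Icd (d * m) d = ∑ k ∈ range (d / 2 + 1),
      d ! * m ^ k * (if m % 2 = 0 then 2 else 1) ^ (d - 2 * k) /
        (2 ^ k * k ! * (d - 2 * k)!) := by
  simp only [Icd_mul_left_eq_card_equivariantInvolutions, card_equivariantInvolutions,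
    card_eq_neg_self, Nat.card_zmod, Fintype.card_fin, mul_assoc]

end ZMod

/-- `I_{n,de} = I_{n,d}`, `I_{n,f} = I_{n,gcd(n,f)}`, and the explicit formulas for
`I_{n,d}` and `I_n = I_{n,n}`. -/
theorem stmt_5 (n d e f : ℕ) (hn : 0 < n) (hd : 0 < d) (he : 0 < e) (hf : 0 < f)
    (hdvd : d ∣ n) (hcop : Nat.gcd e (n / d) = 1) :
    Icd n (d * e) = Icd n d ∧
    Icd n f = Icd n (Nat.gcd n f) ∧
    Icd n d = ∑ k ∈ Finset.range (d / 2 + 1),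
      d.factorial * (n / d) ^ k * (if (n / d) % 2 = 0 then 2 else 1) ^ (d - 2 * k) /
        (2 ^ k * k.factorial * (d - 2 * k).factorial) ∧
    Icd n n = ∑ k ∈ Finset.range (n / 2 + 1),
      n.factorial / (2 ^ k * k.factorial * (n - 2 * k).factorial) := by
  refine ⟨?_, Icd_gcd n f, ?_, ?_⟩
  · obtain ⟨m, rfl⟩ := hdvd
    rw [Nat.mul_div_cancel_left m hd, Nat.gcd_comm] at hcop
    rw [Icd_gcd, Nat.gcd_mul_left, hcop, mul_one]
  · obtain ⟨m, rfl⟩ := hdvd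
    have : NeZero d := ⟨hd.ne'⟩
    have : NeZero m := ⟨(Nat.pos_of_mul_pos_left hn).ne'⟩
    rw [Nat.mul_div_cancel_left m hd]
    exact Icd_mul_left_eq_sum d m
  · have : NeZero n := ⟨hn.ne'⟩
    simpa using Icd_mul_left_eq_sum n 1
end

section
/- Let F be a finite field with q := |F| > 2, let G = GL(2, F), and let H be the subgroup of G consisting of all matrices with first row (α, 0) and second row (β, 1), where α ∈ Fˣ and β ∈ F. Then there exists an element t ∈ G of multiplicative order q² − 1 such that, setting T := {g⁻¹tg : g ∈ G} ∪ Z(G), the triple (G, H, T) is a faithful RCC loop folder of order q² − 1 with ⟨T⟩ = G. In other words, T contains the identity, has q² − 1 elements, is closed under conjugation by G, is a transversal for the right cosets of every conjugate of H in G, generates G, and the core of H in G is trivial; hence there is an RCC loop of order q² − 1 whose right multiplication group is isomorphic to GL(2, q). -/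
open Matrix

/-- The subgroup of `GL(2, F)` of matrices with first row `(α, 0)` and second row
`(β, 1)`, `α ∈ Fˣ`, `β ∈ F` (the conditions "`(0,1)`-entry `0`" and "`(1,1)`-entry `1`"
suffice, invertibility forcing `α ≠ 0`). -/
def lowerTriangularH (F : Type*) [Field F] : Subgroup (GL (Fin 2) F) where
  carrier := {g | (g : Matrix (Fin 2) (Fin 2) F) 0 1 = 0 ∧
    (g : Matrix (Fin 2) (Fin 2) F) 1 1 = 1}
  one_mem' := by
    constructor <;> simp [Matrix.one_apply]
  mul_mem' := by
    rintro A B ⟨hA1, hA2⟩ ⟨hB1, hB2⟩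
    constructor
    · show ((A : Matrix (Fin 2) (Fin 2) F) * (B : Matrix (Fin 2) (Fin 2) F)) 0 1 = 0
      rw [Matrix.mul_apply, Fin.sum_univ_two, hA1, hB1]
      ring
    · show ((A : Matrix (Fin 2) (Fin 2) F) * (B : Matrix (Fin 2) (Fin 2) F)) 1 1 = 1
      rw [Matrix.mul_apply, Fin.sum_univ_two, hB1, hB2, hA2]
      ring
  inv_mem' := by
    rintro A ⟨hA1, hA2⟩
    have h : ((A⁻¹ : GL (Fin 2) F) : Matrix (Fin 2) (Fin 2) F) *
        (A : Matrix (Fin 2) (Fin 2) F) = 1 := by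
      rw [← Units.val_mul, inv_mul_cancel, Units.val_one]
    have e1 : (((A⁻¹ : GL (Fin 2) F) : Matrix (Fin 2) (Fin 2) F) *
        (A : Matrix (Fin 2) (Fin 2) F)) 0 1 = (1 : Matrix (Fin 2) (Fin 2) F) 0 1 := by
      rw [h]
    have e2 : (((A⁻¹ : GL (Fin 2) F) : Matrix (Fin 2) (Fin 2) F) *
        (A : Matrix (Fin 2) (Fin 2) F)) 1 1 = (1 : Matrix (Fin 2) (Fin 2) F) 1 1 := by
      rw [h]
    rw [Matrix.mul_apply, Fin.sum_univ_two, hA1, hA2, mul_zero, mul_one, zero_add,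
      Matrix.one_apply_ne (by decide : (0 : Fin 2) ≠ 1)] at e1
    rw [Matrix.mul_apply, Fin.sum_univ_two, hA1, hA2, mul_zero, mul_one, zero_add,
      Matrix.one_apply_eq] at e2
    exact ⟨e1, e2⟩

/-!
`GL(2, F)` acts transitively on the nonzero vectors of `F²`, and `H` is the stabilizer of the second
basis vector `e`. So `T` is a transversal for the cosets of all conjugates of `H` exactly when it is
sharply transitive on nonzero vectors, that is, when for all `v, w ≠ 0` exactly one element of `T`
maps `v` to `w`.

Let `t` have irreducible characteristic polynomial, so that no conjugate of `t` has an eigenvector.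
If `w` is a multiple of `v`, only a scalar can map `v` to `w`, and exactly one does. If `v, w` are
independent, then so are `v, tv`, and `g` with `gv = v`, `gw = tv` gives a conjugate `g⁻¹tg` mapping
`v` to `w`; it is the only one, since by Cayley–Hamilton the image of `w` is determined as well.

Take for `t` the multiplication by a generator of the multiplicative group of the field extension
of degree `2`. The group `N = ⟨T⟩` is normal. Some `s ∈ T` satisfies `se = t²e`, and `s ≠ t²`: for
`q > 2` the order of `t` is too large for `t²` to be a scalar, and `det t²` differs from `det t`.
Hence `1 ≠ s⁻¹t² ∈ N ∩ H`, and a commutator of this element with a transvection puts a transvection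
into `N`. So `N` contains `SL(2, F)`, and since `det t` generates `Fˣ`, `N = GL(2, F)`.
-/

section GroupAction

open MulAction

variable {G X : Type*} [Group G] [MulAction G X]

/-- A set `T` of group elements is sharply transitive on a set `S` of points if any point of `S`
is carried to any point of `S` by exactly one element of `T`. Here `T` need not be a subgroup, and
`S` need not be stable under `T`. -/
def IsSharplyTransitiveOn (T : Set G) (S : Set X) : Prop :=
  ∀ x ∈ S, ∀ y ∈ S, ∃! t, t ∈ T ∧ t • x = y

theorem IsSharplyTransitiveOn.isLoopFolder_stabilizer {T : Set G} {x : X}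
    (hT : IsSharplyTransitiveOn T (orbit G x)) (h1 : 1 ∈ T) : IsLoopFolder (stabilizer G x) T := by
  refine ⟨h1, fun g a ↦ ?_⟩
  have conj_mem_stabilizer_iff (t : G) :
      g * (a * t⁻¹) * g⁻¹ ∈ stabilizer G x ↔ t • a⁻¹ • g⁻¹ • x = g⁻¹ • x := by
    rw [mem_stabilizer_iff, mul_smul, mul_smul, mul_smul, ← eq_inv_smul_iff, ← eq_inv_smul_iff,
      inv_smul_eq_iff, eq_comm]
  simp only [conj_mem_stabilizer_iff]
  exact hT _ (mem_orbit_of_mem_orbit a⁻¹ (mem_orbit x g⁻¹)) _ (mem_orbit x g⁻¹)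

theorem IsSharplyTransitiveOn.natCard_eq {T : Set G} {x : X}
    (hT : IsSharplyTransitiveOn T (orbit G x)) : Nat.card T = Nat.card (orbit G x) := by
  have existsUnique_smul_eq (y : orbit G x) := hT x (mem_orbit_self x) y y.2
  refine Nat.card_congr (Equiv.ofBijective (fun t ↦ ⟨t.1 • x, mem_orbit x t.1⟩) ⟨?_, ?_⟩)
  · intro s t hst
    exact Subtype.ext <| (existsUnique_smul_eq ⟨t.1 • x, mem_orbit x t.1⟩).unique
      ⟨s.2, congr_arg Subtype.val hst⟩ ⟨t.2, rfl⟩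
  · intro y
    obtain ⟨t, ⟨ht, hty⟩, -⟩ := existsUnique_smul_eq y
    exact ⟨⟨t, ht⟩, Subtype.ext hty⟩

theorem isFaithfulFolder_stabilizer {x : X} (hx : ∀ g : G, (∀ y ∈ orbit G x, g • y = y) → g = 1) :
    IsFaithfulFolder (stabilizer G x) := by
  refine fun g hg ↦ hx g ?_
  rintro _ ⟨a, rfl⟩
  simpa [mul_smul, inv_smul_eq_iff] using hg a⁻¹

theorem IsRCC.normal_closure {T : Set G} (hT : IsRCC T) : (Subgroup.closure T).Normal := by
  suffices Subgroup.closure T = Subgroup.normalClosure T from this ▸ Subgroup.normalClosure_normal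
  refine congr_arg Subgroup.closure (Set.Subset.antisymm Group.subset_conjugatesOfSet ?_)
  intro s hs
  obtain ⟨t, ht, hts⟩ := Group.mem_conjugatesOfSet_iff.mp hs
  obtain ⟨g, rfl⟩ := isConj_iff.mp hts
  simpa using hT t ht g⁻¹

/-- The conjugacy class of `t` together with the center of the group: the set `T` of the loop folder
`(G, H, T)`, for `t` a Singer cycle in `G = GL(2, F)`. -/
def conjClassUnionCenter (t : G) : Set G :=
  (Set.range fun g ↦ g⁻¹ * t * g) ∪ Subgroup.center G

theorem one_mem_conjClassUnionCenter (t : G) : 1 ∈ conjClassUnionCenter t :=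
  Or.inr (Subgroup.one_mem _)

theorem self_mem_conjClassUnionCenter (t : G) : t ∈ conjClassUnionCenter t :=
  Or.inl ⟨1, by simp⟩

theorem isRCC_conjClassUnionCenter (t : G) : IsRCC (conjClassUnionCenter t) := by
  rintro s (⟨a, rfl⟩ | hs) g
  · exact Or.inl ⟨a * g, by group⟩
  · exact Or.inr (Subgroup.Normal.conj_mem' inferInstance s hs g)

theorem eq_top_of_ker_le_of_map_eq_top {G' : Type*} [Group G'] {f : G →* G'} {N : Subgroup G}
    (hker : f.ker ≤ N) (hmap : N.map f = ⊤) : N = ⊤ := by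
  rw [← Subgroup.comap_map_eq_self hker, hmap, Subgroup.comap_top]

end GroupAction

section LinearAlgebra

open MulAction

variable {F n : Type*} [Field F] [Fintype n] [DecidableEq n]

theorem exists_smul_eq_of_linearIndependent {ι : Type*} {v w : ι → n → F}
    (hv : LinearIndependent F v) (hw : LinearIndependent F w) :
    ∃ g : GL n F, ∀ i, g • v i = w i := by
  obtain ⟨e, he⟩ := Submodule.exists_linearEquiv_restrict_eq
    (hv.linearCombinationEquiv.symm ≪≫ₗ hw.linearCombinationEquiv)
  have apply_eq (i : ι) : e (v i) = w i := by
    simpa using (he (hv.linearCombinationEquiv (Finsupp.single i 1))).symm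
  refine ⟨GeneralLinearGroup.toLin.symm (.ofLinearEquiv e), fun i ↦ ?_⟩
  rw [Units.smul_def, smul_eq_mulVec, ← mulVecLin_apply, ← GeneralLinearGroup.coe_toLin,
    MulEquiv.apply_symm_apply]
  exact apply_eq i

theorem orbit_generalLinearGroup_eq {v : n → F} (hv : v ≠ 0) :
    orbit (GL n F) v = {w | w ≠ 0} := by
  ext w
  refine ⟨?_, fun hw ↦ ?_⟩
  · rintro ⟨g, rfl⟩
    exact (smul_ne_zero_iff_ne g).mpr hv
  · obtain ⟨g, hg⟩ := exists_smul_eq_of_linearIndependent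
      (LinearIndependent.of_subsingleton (v := fun _ : Unit ↦ v) () hv)
      (LinearIndependent.of_subsingleton (v := fun _ : Unit ↦ w) () hw)
    exact ⟨g, hg ()⟩

theorem natCard_orbit_generalLinearGroup [Finite F] {v : n → F} (hv : v ≠ 0) :
    Nat.card (orbit (GL n F) v) = Nat.card F ^ Fintype.card n - 1 := by
  rw [orbit_generalLinearGroup_eq hv, Nat.card_coe_set_eq, ← Set.compl_singleton_eq,
    Set.ncard_compl, Set.ncard_singleton, Nat.card_fun, Nat.card_eq_fintype_card (α := n)]

theorem lowerTriangularH_eq_stabilizer :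
    lowerTriangularH F = stabilizer (GL (Fin 2) F) (Pi.single 1 1 : Fin 2 → F) := by
  ext g
  rw [mem_stabilizer_iff, Units.smul_def, smul_eq_mulVec, mulVec_single_one, funext_iff,
    Fin.forall_fin_two]
  exact Iff.rfl

theorem isFaithfulFolder_lowerTriangularH : IsFaithfulFolder (lowerTriangularH F) := by
  rw [lowerTriangularH_eq_stabilizer]
  refine isFaithfulFolder_stabilizer fun g hg ↦ Units.ext <| ext_iff_smul.mpr fun v ↦ ?_
  rw [orbit_generalLinearGroup_eq (Pi.single_ne_zero_iff.mpr one_ne_zero)] at hg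
  obtain rfl | hv := eq_or_ne v 0
  · rw [smul_zero, smul_zero]
  · exact (hg v hv).trans (one_smul _ v).symm

theorem linearIndependent_pair_mulVec_of_irreducible [Nontrivial n] {A : Matrix n n F}
    (hA : Irreducible A.charpoly) {v : n → F} (hv : v ≠ 0) :
    LinearIndependent F ![v, A *ᵥ v] := by
  refine (LinearIndependent.pair_iff' hv).mpr fun c hc ↦ ?_
  have hroot : A.charpoly.IsRoot c := by
    rw [← mem_spectrum_iff_isRoot_charpoly, ← spectrum_toLin']
    refine (Module.End.hasEigenvalue_of_hasEigenvector (x := v) ⟨?_, hv⟩).mem_spectrum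
    rw [Module.End.mem_eigenspace_iff, toLin'_apply, hc]
  refine hA.not_isRoot_of_natDegree_ne_one ?_ hroot
  rw [charpoly_natDegree_eq_dim]
  exact Fintype.one_lt_card.ne'

theorem eq_of_charpoly_eq_of_mulVec_eq {A B : Matrix (Fin 2) (Fin 2) F}
    (hcharpoly : A.charpoly = B.charpoly) {v : Fin 2 → F}
    (hv : LinearIndependent F ![v, A *ᵥ v]) (hAB : A *ᵥ v = B *ᵥ v) : A = B := by
  have mulVec_mulVec_self (M : Matrix (Fin 2) (Fin 2) F) :
      M *ᵥ M *ᵥ v = M.trace • M *ᵥ v - M.det • v := by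
    have hM : M ^ 2 - M.trace • M + M.det • (1 : Matrix (Fin 2) (Fin 2) F) = 0 := by
      simpa [charpoly_fin_two, Algebra.smul_def] using aeval_self_charpoly M
    have hMv := congr_arg (· *ᵥ v) hM
    simp only [add_mulVec, sub_mulVec, smul_mulVec, one_mulVec, zero_mulVec, sq,
      ← mulVec_mulVec] at hMv
    rw [← sub_eq_zero, ← hMv]
    abel
  have hAAv : A *ᵥ A *ᵥ v = B *ᵥ A *ᵥ v := by
    rw [mulVec_mulVec_self, hAB, mulVec_mulVec_self, trace_eq_neg_charpoly_coeff,
      trace_eq_neg_charpoly_coeff, det_eq_sign_charpoly_coeff, det_eq_sign_charpoly_coeff,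
      hcharpoly]
  refine toLin'.injective ((basisOfLinearIndependentOfCardEqFinrank hv (by simp)).ext fun i ↦ ?_)
  fin_cases i
  · simpa using hAB
  · simpa using hAAv

theorem existsUnique_mem_center_smul_eq {v w : n → F} (hv : v ≠ 0) (hw : w ≠ 0)
    (hvw : ¬LinearIndependent F ![v, w]) :
    ∃! z, z ∈ Subgroup.center (GL n F) ∧ z • v = w := by
  have scalar_smul (d : Fˣ) : GeneralLinearGroup.scalar n d • v = (d : F) • v := by
    simp [Units.smul_def]
  rw [LinearIndependent.pair_iff' hv] at hvw
  push Not at hvw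
  obtain ⟨c, rfl⟩ := hvw
  rw [GeneralLinearGroup.center_eq_range_scalar]
  refine ⟨GeneralLinearGroup.scalar n (Units.mk0 c (left_ne_zero_of_smul hw)),
    ⟨⟨_, rfl⟩, scalar_smul _⟩, ?_⟩
  rintro _ ⟨⟨d, rfl⟩, hd⟩
  congr 1
  exact Units.ext (smul_left_injective F hv ((scalar_smul d).symm.trans hd))

theorem not_linearIndependent_pair_smul_of_mem_center {v : n → F} {z : GL n F}
    (hz : z ∈ Subgroup.center (GL n F)) :
    ¬LinearIndependent F ![v, z • v] := by
  rw [GeneralLinearGroup.center_eq_range_scalar] at hz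
  obtain ⟨c, rfl⟩ := hz
  intro h
  have hc := LinearIndependent.pair_iff.mp h (c : F) (-1) (by simp [Units.smul_def])
  exact c.ne_zero hc.1

theorem charpoly_coe_conj {R : Type*} [CommRing R] (g t : GL n R) :
    (g⁻¹ * t * g).1.charpoly = t.1.charpoly := by
  simp [coe_units_inv]

theorem existsUnique_conj_smul_eq {t : GL (Fin 2) F} (ht : Irreducible t.1.charpoly)
    {v w : Fin 2 → F} (hvw : LinearIndependent F ![v, w]) :
    ∃! s, s ∈ Set.range (fun g ↦ g⁻¹ * t * g) ∧ s • v = w := by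
  refine existsUnique_of_exists_of_unique ?_ ?_
  · obtain ⟨g, hg⟩ := exists_smul_eq_of_linearIndependent hvw
      (linearIndependent_pair_mulVec_of_irreducible ht (hvw.ne_zero 0))
    have hgv : g • v = v := hg 0
    have hgw : g • w = t • v := hg 1
    exact ⟨g⁻¹ * t * g, ⟨g, rfl⟩, by rw [mul_smul, mul_smul, hgv, ← hgw, inv_smul_smul]⟩
  · rintro _ _ ⟨⟨a, rfl⟩, rfl⟩ ⟨⟨b, rfl⟩, hb⟩
    refine Units.ext (eq_of_charpoly_eq_of_mulVec_eq ?_ hvw hb.symm)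
    rw [charpoly_coe_conj, charpoly_coe_conj]

theorem isSharplyTransitiveOn_conjClassUnionCenter {t : GL (Fin 2) F}
    (ht : Irreducible t.1.charpoly) :
    IsSharplyTransitiveOn (conjClassUnionCenter t) {v : Fin 2 → F | v ≠ 0} := by
  intro v hv w hw
  by_cases hvw : LinearIndependent F ![v, w]
  · refine (existsUnique_congr fun s ↦ and_congr_left fun hs ↦ (or_iff_left ?_).symm).mp
      (existsUnique_conj_smul_eq ht hvw)
    exact fun hz ↦ not_linearIndependent_pair_smul_of_mem_center hz (hs ▸ hvw)
  · refine (existsUnique_congr fun s ↦ and_congr_left fun hs ↦ (or_iff_right ?_).symm).mp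
      (existsUnique_mem_center_smul_eq hv hw hvw)
    rintro ⟨g, rfl⟩
    have hst : Irreducible (g⁻¹ * t * g).1.charpoly := (charpoly_coe_conj g t).symm ▸ ht
    exact hvw (hs ▸ linearIndependent_pair_mulVec_of_irreducible hst hv)

end LinearAlgebra

section Generation

open Matrix.SpecialLinearGroup

variable {F : Type*} [Field F]

theorem conj_transvection_of_mem_lowerTriangularH {g : GL (Fin 2) F}
    (hg : g ∈ lowerTriangularH F) (b : F) :
    g * toGL (transvection one_ne_zero b) * g⁻¹ =
      toGL (transvection one_ne_zero (b / g.1 0 0)) := by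
  obtain ⟨h01, h11⟩ := hg
  have h00 : g.1 0 0 ≠ 0 := by
    have hdet := g.det_ne_zero
    rw [det_fin_two, h01, zero_mul, sub_zero] at hdet
    exact left_ne_zero_of_mul hdet
  rw [mul_inv_eq_iff_eq_mul]
  ext i j
  fin_cases i <;> fin_cases j <;>
    simp [transvection_coe, mul_add, add_mul, h01, h11, h00]

theorem exists_ne_zero_transvection_mem {N : Subgroup (GL (Fin 2) F)} [N.Normal] {h : GL (Fin 2) F}
    (hN : h ∈ N) (hH : h ∈ lowerTriangularH F) (h1 : h ≠ 1) :
    ∃ c : F, c ≠ 0 ∧ toGL (transvection one_ne_zero c) ∈ N := by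
  by_cases h00 : h.1 0 0 = 1
  · have h_eq : h = toGL (transvection one_ne_zero (h.1 1 0)) := by
      ext i j
      fin_cases i <;> fin_cases j <;> simp [transvection_coe, h00, hH.1, hH.2]
    refine ⟨h.1 1 0, fun h10 ↦ h1 ?_, h_eq ▸ hN⟩
    rw [h_eq, h10, transvection_coeff_zero, map_one]
  · let u : GL (Fin 2) F := toGL (transvection one_ne_zero 1)
    refine ⟨1 / h.1 0 0 - 1, ?_, ?_⟩
    · rwa [sub_ne_zero, one_div, ne_eq, inv_eq_one]
    · have commutator_mem : h * (u * h⁻¹ * u⁻¹) ∈ N :=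
        mul_mem hN (Subgroup.Normal.conj_mem inferInstance _ (inv_mem hN) u)
      have commutator_eq :
          h * (u * h⁻¹ * u⁻¹) = toGL (transvection one_ne_zero (1 / h.1 0 0 - 1)) := by
        rw [← mul_assoc, ← mul_assoc, conj_transvection_of_mem_lowerTriangularH hH, ← map_inv,
          ← map_mul, transvection_inv, ← transvection_add, sub_eq_add_neg]
      exact commutator_eq ▸ commutator_mem

theorem isConj_transvection {i j k l : Fin 2} (hij : i ≠ j) (hkl : k ≠ l) {b c : F} (hb : b ≠ 0)
    (hc : c ≠ 0) : IsConj (toGL (transvection hij b)) (toGL (transvection hkl c)) := by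
  suffices ∀ {k l : Fin 2} (hkl : k ≠ l) {c : F}, c ≠ 0 →
      IsConj (toGL (transvection one_ne_zero 1)) (toGL (transvection hkl c)) from
    (this hij hb).symm.trans (this hkl hc)
  intro k l hkl c hc
  rw [isConj_iff]
  fin_cases k <;> fin_cases l
  · exact (hkl rfl).elim
  · refine ⟨GeneralLinearGroup.mkOfDetNeZero !![0, c; 1, 0] (by simpa), ?_⟩
    rw [mul_inv_eq_iff_eq_mul]
    ext i j
    fin_cases i <;> fin_cases j <;>
      simp [GeneralLinearGroup.mkOfDetNeZero, transvection_coe, mul_apply]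
  · refine ⟨GeneralLinearGroup.mkOfDetNeZero !![1, 0; 0, c] (by simpa), ?_⟩
    rw [mul_inv_eq_iff_eq_mul]
    ext i j
    fin_cases i <;> fin_cases j <;>
      simp [GeneralLinearGroup.mkOfDetNeZero, transvection_coe, mul_apply]
  · exact (hkl rfl).elim

theorem toGL_transvection_mem {N : Subgroup (GL (Fin 2) F)} [N.Normal] {i j k l : Fin 2}
    {hij : i ≠ j} {c : F} (hc : c ≠ 0) (hcN : toGL (transvection hij c) ∈ N) (hkl : k ≠ l)
    (b : F) : toGL (transvection hkl b) ∈ N := by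
  obtain rfl | hb := eq_or_ne b 0
  · rw [transvection_coeff_zero, map_one]
    exact one_mem N
  · obtain ⟨g, hg⟩ := isConj_iff.mp (isConj_transvection hij hkl hc hb)
    exact hg ▸ Subgroup.Normal.conj_mem inferInstance _ hcN g

theorem ker_det_le_of_transvection_mem {N : Subgroup (GL (Fin 2) F)}
    (hN : ∀ (i j : Fin 2) (hij : i ≠ j) (b : F), toGL (transvection hij b) ∈ N) :
    (GeneralLinearGroup.det : GL (Fin 2) F →* Fˣ).ker ≤ N := by
  intro g hg
  obtain ⟨a, rfl⟩ : g ∈ Set.range toGL := by rwa [range_toGL]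
  induction a using SL2.transvection_induction with
  | htransvec i j hij b => exact hN i j hij b
  | hmul a b ha hb =>
    rw [map_mul]
    exact mul_mem (ha (by simp)) (hb (by simp))

theorem exists_mem_closure_mem_lowerTriangularH_ne_one {t : GL (Fin 2) F}
    (ht : Irreducible t.1.charpoly) (hdet : GeneralLinearGroup.det t ≠ 1)
    (hsq : t ^ 2 ∉ Subgroup.center (GL (Fin 2) F)) :
    ∃ h ∈ Subgroup.closure (conjClassUnionCenter t), h ∈ lowerTriangularH F ∧ h ≠ 1 := by
  have he : (Pi.single 1 1 : Fin 2 → F) ≠ 0 := Pi.single_ne_zero_iff.mpr one_ne_zero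
  obtain ⟨s, ⟨hsT, hs⟩, -⟩ := isSharplyTransitiveOn_conjClassUnionCenter ht _ he
    (t ^ 2 • Pi.single 1 1) ((smul_ne_zero_iff_ne _).mpr he)
  have htN := Subgroup.subset_closure (self_mem_conjClassUnionCenter t)
  refine ⟨s⁻¹ * t ^ 2, mul_mem (inv_mem (Subgroup.subset_closure hsT)) (pow_mem htN 2), ?_, ?_⟩
  · rw [lowerTriangularH_eq_stabilizer, MulAction.mem_stabilizer_iff, mul_smul, ← hs,
      inv_smul_smul]
  · rw [Ne, inv_mul_eq_one]
    rintro rfl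
    obtain ⟨g, hg⟩ | hcenter := hsT
    · have hdet_sq := congr_arg GeneralLinearGroup.det hg
      simp only [map_mul, map_inv, inv_mul_cancel_comm, sq] at hdet_sq
      exact hdet (left_eq_mul.mp hdet_sq)
    · exact hsq hcenter

theorem closure_conjClassUnionCenter_eq_top [Nontrivial Fˣ] {t : GL (Fin 2) F}
    (ht : Irreducible t.1.charpoly) (hdet : Subgroup.zpowers (GeneralLinearGroup.det t) = ⊤)
    (hsq : t ^ 2 ∉ Subgroup.center (GL (Fin 2) F)) :
    Subgroup.closure (conjClassUnionCenter t) = ⊤ := by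
  have : (Subgroup.closure (conjClassUnionCenter t)).Normal :=
    (isRCC_conjClassUnionCenter t).normal_closure
  have hdet_ne : GeneralLinearGroup.det t ≠ 1 := fun h ↦
    bot_ne_top (Subgroup.zpowers_one_eq_bot.symm.trans (h ▸ hdet))
  obtain ⟨h, hN, hH, h1⟩ := exists_mem_closure_mem_lowerTriangularH_ne_one ht hdet_ne hsq
  obtain ⟨c, hc, hcN⟩ := exists_ne_zero_transvection_mem hN hH h1
  have hker := ker_det_le_of_transvection_mem fun _ _ hij b ↦ toGL_transvection_mem hc hcN hij b
  refine eq_top_of_ker_le_of_map_eq_top hker (top_unique ?_)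
  rw [← hdet, Subgroup.zpowers_le]
  exact Subgroup.mem_map_of_mem _ (Subgroup.subset_closure (self_mem_conjClassUnionCenter t))

end Generation

section SingerCycle

open IntermediateField Polynomial

theorem charpoly_lmul_of_adjoin_eq_top {F K : Type*} [Field F] [Field K] [Algebra F K]
    [FiniteDimensional F K] {x : K} (hx : F⟮x⟯ = ⊤) :
    (Algebra.lmul F K x).charpoly = minpoly F x := by
  refine eq_of_monic_of_dvd_of_natDegree_le (minpoly.monic (.of_finite F x))
    (LinearMap.charpoly_monic _) (minpoly.dvd F x (Algebra.aeval_self_charpoly_lmul x)) ?_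
  rw [LinearMap.charpoly_natDegree, (Field.primitive_element_iff_minpoly_natDegree_eq F x).mp hx]

theorem adjoin_eq_top_of_zpowers_eq_top {F K : Type*} [Field F] [Field K] [Algebra F K] {z : Kˣ}
    (hz : Subgroup.zpowers z = ⊤) : F⟮(z : K)⟯ = ⊤ := by
  refine top_unique fun y _ ↦ ?_
  obtain rfl | hy := eq_or_ne y 0
  · exact zero_mem _
  · obtain ⟨k, hk⟩ : Units.mk0 y hy ∈ Subgroup.zpowers z := hz ▸ Subgroup.mem_top _
    have hky : (z : K) ^ k = y := by simpa using congr_arg Units.val hk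
    exact hky ▸ zpow_mem (mem_adjoin_simple_self F (z : K)) k

theorem exists_singerCycle (F : Type*) [Field F] [Finite F] (n : ℕ) [NeZero n] :
    ∃ t : GL (Fin n) F, Irreducible t.1.charpoly ∧ orderOf t = Nat.card F ^ n - 1 ∧
      Subgroup.zpowers (GeneralLinearGroup.det t) = ⊤ := by
  obtain ⟨p, hp⟩ := CharP.exists F
  have : Fact p.Prime := ⟨CharP.char_is_prime F p⟩
  let K := FiniteField.Extension F p n
  have : Finite K := Module.finite_of_finite F
  let b : Module.Basis (Fin n) F K :=
    Module.finBasisOfFinrankEq F K (FiniteField.finrank_extension F p n)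
  obtain ⟨z, hz⟩ := IsCyclic.exists_generator (α := Kˣ)
  have zpowers_z : Subgroup.zpowers z = ⊤ := (Subgroup.eq_top_iff' _).mpr hz
  refine ⟨Units.map (Algebra.leftMulMatrix b).toMonoidHom z, ?_, ?_, ?_⟩
  · have hcharpoly : (Algebra.leftMulMatrix b z).charpoly = minpoly F (z : K) := by
      rw [Algebra.leftMulMatrix_apply, LinearMap.charpoly_toMatrix,
        charpoly_lmul_of_adjoin_eq_top (adjoin_eq_top_of_zpowers_eq_top zpowers_z)]
    exact hcharpoly ▸ minpoly.irreducible (.of_finite F (z : K))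
  · rw [orderOf_injective _ (Units.map_injective (Algebra.leftMulMatrix_injective b)),
      orderOf_eq_card_of_forall_mem_zpowers hz, Nat.card_units, FiniteField.natCard_extension]
  · have det_eq_norm : GeneralLinearGroup.det (Units.map (Algebra.leftMulMatrix b).toMonoidHom z) =
        Units.map (Algebra.norm F) z :=
      Units.ext (Algebra.norm_eq_matrix_det b (z : K)).symm
    rw [det_eq_norm, ← MonoidHom.map_zpowers, zpowers_z, ← MonoidHom.range_eq_map]
    exact MonoidHom.range_eq_top.mpr (FiniteField.unitsMap_norm_surjective F K)

theorem orderOf_dvd_of_pow_mem_center {F n : Type*} [Field F] [Finite F] [Fintype n]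
    [DecidableEq n] {t : GL n F} {k : ℕ} (ht : t ^ k ∈ Subgroup.center (GL n F)) :
    orderOf t ∣ k * (Nat.card F - 1) := by
  rw [GeneralLinearGroup.center_eq_range_scalar] at ht
  obtain ⟨c, hc⟩ := ht
  refine orderOf_dvd_of_pow_eq_one ?_
  rw [pow_mul, ← hc, ← map_pow, ← Nat.card_units, pow_card_eq_one', map_one]

theorem sq_notMem_center_of_orderOf_eq {F n : Type*} [Field F] [Finite F] [Fintype n]
    [DecidableEq n] (hF : 2 < Nat.card F) {t : GL n F} (ht : orderOf t = Nat.card F ^ 2 - 1) :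
    t ^ 2 ∉ Subgroup.center (GL n F) := by
  intro hcenter
  have hdvd : (Nat.card F + 1) * (Nat.card F - 1) ∣ 2 * (Nat.card F - 1) := by
    rw [← Nat.sq_sub_sq, one_pow, ← ht]
    exact orderOf_dvd_of_pow_mem_center hcenter
  have := Nat.le_of_dvd two_pos (Nat.dvd_of_mul_dvd_mul_right (by lia) hdvd)
  lia

end SingerCycle

/-- There is an RCC loop of order `q² - 1` with right multiplication group `GL(2, q)`:
taking `t` a Singer cycle and `T` its conjugacy class together with the scalar matrices,
`(GL(2, F), H, T)` is a faithful RCC loop folder of order `q² - 1` with `⟨T⟩ = G`. -/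
theorem stmt_6 (F : Type*) [Field F] [Fintype F] (hq : 2 < Fintype.card F) :
    ∃ t : GL (Fin 2) F, orderOf t = Fintype.card F ^ 2 - 1 ∧
      (1 : GL (Fin 2) F) ∈
        ((Set.range fun g : GL (Fin 2) F => g⁻¹ * t * g) ∪
          (Subgroup.center (GL (Fin 2) F) : Set (GL (Fin 2) F))) ∧
      Nat.card ((Set.range fun g : GL (Fin 2) F => g⁻¹ * t * g) ∪
          (Subgroup.center (GL (Fin 2) F) : Set (GL (Fin 2) F)) : Set (GL (Fin 2) F)) =
        Fintype.card F ^ 2 - 1 ∧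
      IsRCC ((Set.range fun g : GL (Fin 2) F => g⁻¹ * t * g) ∪
          (Subgroup.center (GL (Fin 2) F) : Set (GL (Fin 2) F))) ∧
      IsLoopFolder (lowerTriangularH F)
        ((Set.range fun g : GL (Fin 2) F => g⁻¹ * t * g) ∪
          (Subgroup.center (GL (Fin 2) F) : Set (GL (Fin 2) F))) ∧
      Subgroup.closure ((Set.range fun g : GL (Fin 2) F => g⁻¹ * t * g) ∪
          (Subgroup.center (GL (Fin 2) F) : Set (GL (Fin 2) F))) = ⊤ ∧
      IsFaithfulFolder (lowerTriangularH F) := by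
  obtain ⟨t, hirr, horder, hdet⟩ := exists_singerCycle F 2
  rw [← Nat.card_eq_fintype_card] at hq ⊢
  have : Nontrivial Fˣ := Finite.one_lt_card_iff_nontrivial.mp (by rw [Nat.card_units]; lia)
  have he : (Pi.single 1 1 : Fin 2 → F) ≠ 0 := Pi.single_ne_zero_iff.mpr one_ne_zero
  have hsharp : IsSharplyTransitiveOn (conjClassUnionCenter t)
      (MulAction.orbit (GL (Fin 2) F) (Pi.single 1 1 : Fin 2 → F)) :=
    orbit_generalLinearGroup_eq he ▸ isSharplyTransitiveOn_conjClassUnionCenter hirr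
  have hfolder : IsLoopFolder (lowerTriangularH F) (conjClassUnionCenter t) :=
    lowerTriangularH_eq_stabilizer (F := F) ▸
      hsharp.isLoopFolder_stabilizer (one_mem_conjClassUnionCenter t)
  have hcard : Nat.card (conjClassUnionCenter t) = Nat.card F ^ 2 - 1 :=
    hsharp.natCard_eq.trans (natCard_orbit_generalLinearGroup he)
  exact ⟨t, horder, one_mem_conjClassUnionCenter t, hcard, isRCC_conjClassUnionCenter t, hfolder,
    closure_conjClassUnionCenter_eq_top hirr hdet (sq_notMem_center_of_orderOf_eq hq horder),
    isFaithfulFolder_lowerTriangularH⟩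
end

section
/- Let (G, H, T) be an RCC loop folder and let K be a subgroup of G containing both H and the commutator subgroup G' of G (i.e., HG' ≤ K). Then for every t ∈ T the conjugacy class of t in G has at most |K : H| elements; that is, |G : C_G(t)| ≤ |K : H| for all t ∈ T. -/
/-!
The conjugates of `t` lie in the single coset `Kt`, because `K` contains the commutator subgroup,
and in pairwise distinct right cosets of `H`, because they all belong to the transversal `T`.
-/

open Cardinal

section

variable {G : Type*} [Group G]

theorem IsLoopFolder.eq_of_mul_inv_mem {H : Subgroup G} {T : Set G} (h : IsLoopFolder H T)
    {s t : G} (hs : s ∈ T) (ht : t ∈ T) (hst : s * t⁻¹ ∈ H) : s = t :=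
  (h.2 1 s).unique ⟨hs, by simp⟩ ⟨ht, by simpa using hst⟩

theorem IsRCC.conjugatesOf_subset {T : Set G} (h : IsRCC T) {t : G} (ht : t ∈ T) :
    conjugatesOf t ⊆ T := by
  intro s hs
  obtain ⟨g, rfl⟩ := isConj_iff.mp hs
  simpa using h t ht g⁻¹

theorem mul_inv_mem_commutator_of_isConj {a b : G} (h : IsConj a b) : b * a⁻¹ ∈ commutator G := by
  obtain ⟨g, rfl⟩ := isConj_iff.mp h
  exact Subgroup.commutator_mem_commutator (Subgroup.mem_top g) (Subgroup.mem_top a)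

theorem mk_quotient_centralizer (t : G) :
    #(G ⧸ Subgroup.centralizer {t}) = #(conjugatesOf t) := by
  have horbit : MulAction.orbit (ConjAct G) t = conjugatesOf t :=
    ConjAct.orbit_eq_carrier_conjClasses t
  rw [← horbit, Subgroup.centralizer_eq_comap_stabilizer]
  exact (MulAction.orbitEquivQuotientStabilizer (ConjAct G) t).symm.cardinal_eq

theorem mk_le_mk_quotient_subgroupOf {H K : Subgroup G} {S : Set G} (a : G)
    (hK : ∀ s ∈ S, s * a⁻¹ ∈ K) (hH : ∀ s ∈ S, ∀ t ∈ S, s * t⁻¹ ∈ H → s = t) :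
    #S ≤ #(K ⧸ H.subgroupOf K) := by
  -- Inversion turns right cosets of `H` into the left cosets that make up the quotient.
  let f (s : S) : K ⧸ H.subgroupOf K := QuotientGroup.mk (⟨s * a⁻¹, hK s s.2⟩⁻¹ : K)
  refine mk_le_of_injective (f := f) fun s t hst => Subtype.ext (hH s s.2 t t.2 ?_)
  simpa [Subgroup.mem_subgroupOf] using QuotientGroup.eq.mp hst

theorem stmt_8_general (H K : Subgroup G) (T : Set G) (hLF : IsLoopFolder H T) (hRCC : IsRCC T)
    (hGK : commutator G ≤ K) :
    ∀ t ∈ T, #(G ⧸ Subgroup.centralizer {t}) ≤ #(K ⧸ H.subgroupOf K) := by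
  intro t ht
  have hT : conjugatesOf t ⊆ T := hRCC.conjugatesOf_subset ht
  rw [mk_quotient_centralizer]
  exact mk_le_mk_quotient_subgroupOf t (fun s hs => hGK (mul_inv_mem_commutator_of_isConj hs))
    fun r hr s hs => hLF.eq_of_mul_inv_mem (hT hr) (hT hs)

end

/-- In an RCC loop folder, if `HG' ≤ K`, then the conjugacy classes of elements of `T`
have length at most `|K : H|`. -/
theorem stmt_8 {G : Type*} [Group G] [Finite G] (H K : Subgroup G) (T : Set G)
    (hLF : IsLoopFolder H T) (hRCC : IsRCC T)
    (hHK : H ≤ K) (hGK : commutator G ≤ K) :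
    ∀ t ∈ T, (Subgroup.centralizer {t}).index ≤ H.relIndex K :=
  fun t ht => toNat_le_toNat (stmt_8_general H K T hLF hRCC hGK t ht) (lt_aleph0_of_finite _)
end

section
/- Let p be a prime and let G be a subgroup of the symmetric group S_p on p points such that p divides |G|. Let g ∈ G with g ≠ 1. Then: (a) if p does not divide the order of g, then p divides the index |G : C_G(g)| of the centralizer of g in G; (b) if p divides the order of g, then |C_G(g)| = p. -/
/-!
An element centralizing a transitive group is determined by where it sends a single point, so a
transitive abelian subgroup of a faithful permutation group is its own centralizer. In prime degree
`p` an element `s` of order `p` is a `p`-cycle, hence its centralizer is `⟨s⟩`. If `p` divides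
`|C_G(g)|`, Cauchy's theorem gives such an `s` commuting with `g`; thus `g ∈ ⟨s⟩`, and `g ≠ 1` has
order `p`. Both parts follow, since `|G| = |C_G(g)| * |G : C_G(g)|` and `⟨g⟩ ≤ C_G(g)`.
-/

open MulAction Subgroup

section FaithfulAction

variable {G X : Type*} [Group G] [MulAction G X] [FaithfulSMul G X]

theorem eq_one_of_mem_centralizer_of_smul_eq_self {H : Subgroup G} [IsPretransitive H X]
    {t : G} (ht : t ∈ centralizer (H : Set G)) {x : X} (hx : t • x = x) : t = 1 := by
  refine FaithfulSMul.eq_of_smul_eq_smul fun y : X ↦ ?_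
  obtain ⟨h, rfl⟩ := exists_smul_eq H x y
  have hth : (h : G) * t = t * h := mem_centralizer_iff.mp ht h h.2
  rw [one_smul, Subgroup.smul_def, ← mul_smul, ← hth, mul_smul, hx]

variable (X) in
theorem centralizer_eq_self_of_isPretransitive (H : Subgroup G) [IsMulCommutative H]
    [IsPretransitive H X] : centralizer (H : Set G) = H := by
  refine le_antisymm (fun t ht ↦ ?_) (le_centralizer H)
  rcases isEmpty_or_nonempty X with _ | ⟨⟨x⟩⟩
  · have t_eq_one : t = 1 := FaithfulSMul.eq_of_smul_eq_smul fun y : X ↦ isEmptyElim y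
    exact t_eq_one ▸ H.one_mem
  · obtain ⟨h, hx⟩ := exists_smul_eq H x (t • x)
    have quotient_eq_one : (h : G)⁻¹ * t = 1 :=
      eq_one_of_mem_centralizer_of_smul_eq_self (H := H) (x := x)
        (mul_mem (inv_mem (le_centralizer H h.2)) ht)
        (by rw [mul_smul, ← hx, Subgroup.smul_def, inv_smul_smul])
    exact inv_mul_eq_one.mp quotient_eq_one ▸ h.2

theorem isPretransitive_zpowers_of_orderOf_eq_card (hX : (Nat.card X).Prime) {s : G}
    (hs : orderOf s = Nat.card X) : IsPretransitive (zpowers s) X := by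
  classical
  have : Finite X := Nat.finite_of_card_ne_zero hX.ne_zero
  have := Fintype.ofFinite X
  rw [Nat.card_eq_fintype_card] at hX hs
  have orderOf_toPerm : orderOf (toPermHom G X s) = Fintype.card X :=
    (orderOf_injective _ toPerm_injective s).trans hs
  have isCycle : (toPermHom G X s).IsCycle :=
    Equiv.Perm.isCycle_of_prime_order'' hX orderOf_toPerm
  have support_eq_univ : (toPermHom G X s).support = Finset.univ := by
    rw [← Finset.card_eq_iff_eq_univ, ← isCycle.orderOf, orderOf_toPerm]
  have apply_ne (x : X) : toPermHom G X s x ≠ x :=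
    Equiv.Perm.mem_support.mp (support_eq_univ ▸ Finset.mem_univ x)
  refine ⟨fun x y ↦ ?_⟩
  obtain ⟨k, hk⟩ := isCycle.exists_zpow_eq (apply_ne x) (apply_ne y)
  exact ⟨⟨s ^ k, k, rfl⟩, by rwa [← map_zpow] at hk⟩

theorem centralizer_singleton_eq_zpowers_of_orderOf_eq_card (hX : (Nat.card X).Prime) {s : G}
    (hs : orderOf s = Nat.card X) : centralizer ({s} : Set G) = zpowers s := by
  have := isPretransitive_zpowers_of_orderOf_eq_card hX hs
  rw [← centralizer_closure, ← zpowers_eq_closure]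
  exact centralizer_eq_self_of_isPretransitive X (zpowers s)

theorem orderOf_eq_card_of_card_dvd_card_centralizer (hX : (Nat.card X).Prime) {g : G}
    (hg : g ≠ 1) (h : Nat.card X ∣ Nat.card (centralizer ({g} : Set G))) :
    orderOf g = Nat.card X := by
  have : Fact (Nat.card X).Prime := ⟨hX⟩
  have : Finite X := Nat.finite_of_card_ne_zero hX.ne_zero
  have : Finite G := Finite.of_injective (toPerm (β := X)) toPerm_injective
  obtain ⟨⟨s, s_comm⟩, orderOf_s⟩ := exists_prime_orderOf_dvd_card' (Nat.card X) h
  rw [orderOf_mk] at orderOf_s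
  have g_mem : g ∈ zpowers s := by
    rw [← centralizer_singleton_eq_zpowers_of_orderOf_eq_card hX orderOf_s]
    exact mem_centralizer_singleton_iff.mpr (mem_centralizer_singleton_iff.mp s_comm).symm
  have orderOf_dvd : orderOf g ∣ Nat.card X := orderOf_s ▸ orderOf_dvd_of_mem_zpowers g_mem
  exact (hX.eq_one_or_self_of_dvd _ orderOf_dvd).resolve_left (mt orderOf_eq_one_iff.mp hg)

theorem stmt_9_general (hX : (Nat.card X).Prime) (hG : Nat.card X ∣ Nat.card G) {g : G}
    (hg : g ≠ 1) :
    (¬ Nat.card X ∣ orderOf g → Nat.card X ∣ (centralizer ({g} : Set G)).index) ∧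
    (Nat.card X ∣ orderOf g → Nat.card (centralizer ({g} : Set G)) = Nat.card X) := by
  constructor
  · intro not_dvd
    rw [← card_mul_index (centralizer ({g} : Set G)), hX.dvd_mul] at hG
    exact hG.resolve_left fun h ↦
      not_dvd (orderOf_eq_card_of_card_dvd_card_centralizer hX hg h).symm.dvd
  · intro dvd_orderOf
    have g_mem : g ∈ centralizer ({g} : Set G) := mem_centralizer_singleton_iff.mpr rfl
    have orderOf_g : orderOf g = Nat.card X :=
      orderOf_eq_card_of_card_dvd_card_centralizer hX hg
        (dvd_orderOf.trans (orderOf_dvd_natCard _ g_mem))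
    rw [centralizer_singleton_eq_zpowers_of_orderOf_eq_card hX orderOf_g, Nat.card_zpowers,
      orderOf_g]

end FaithfulAction

/-- For `G ≤ S_p` with `p ∣ |G|` and `1 ≠ g ∈ G`: (a) if `p ∤ |g|` then
`p ∣ |G : C_G(g)|`; (b) if `p ∣ |g|` then `|C_G(g)| = p`. -/
theorem stmt_9 (p : ℕ) (hp : p.Prime) (X : Type*) [Fintype X] (hX : Fintype.card X = p)
    (G : Subgroup (Equiv.Perm X)) (hpG : p ∣ Nat.card G)
    (g : G) (hg : g ≠ 1) :
    (¬ p ∣ orderOf g → p ∣ (Subgroup.centralizer ({g} : Set G)).index) ∧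
    (p ∣ orderOf g → Nat.card (Subgroup.centralizer ({g} : Set G)) = p) := by
  obtain rfl : Nat.card X = p := Nat.card_eq_fintype_card.trans hX
  exact stmt_9_general hp hpG hg
end

section
/- Let p and q be distinct primes, let (G, H, T) be a faithful RCC loop folder of order pq with ⟨T⟩ = G, and let K be a subgroup of G with H ≤ K ≤ G, |G : K| = q and |K : H| = p. Set T₁ := T ∩ K, K₁ := ⟨T₁⟩ and H₁ := H ∩ K₁. Then: (K₁, H₁, T₁) is an RCC loop folder of order p (in particular |T₁| = p, T₁ is invariant under conjugation by K₁, and T₁ is a transversal for the right cosets of every K₁-conjugate of H₁ in K₁); K₁ is abelian; K₁ is a normal subgroup of K; K = HK₁; and H₁ is a normal subgroup of K. -/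
open Pointwise

/-!
Write `T₁ = T ∩ K`, `K₁ = ⟨T₁⟩` and `H₁ = H ∩ K₁`. The set `T₁` is a right transversal of `H` in
`K` and of `H₁` in `K₁`, so `|K₁ : H₁| = |T₁| = p`. Conjugation makes `K₁` act on the `p - 1`
elements of `T₁ \ {1}`, and the kernel is `Z(K₁)` because `T₁` generates `K₁`. So `|K₁ : Z(K₁)|`
divides `(p - 1)!` and is coprime to `p`, which forces `H₁ Z(K₁) = K₁`. In particular `H₁` is normal
in `K₁`; hence, for `h ∈ H₁` and `t ∈ T₁`, the elements `h t h⁻¹` and `t` of `T₁` lie in the same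
coset of `H₁` and coincide. Thus `H₁` centralizes `T₁`, and `K₁ = H₁ Z(K₁) = Z(K₁)` is abelian.
-/

open Subgroup

section Group

variable {A : Type*} [Group A] {B C L : Subgroup A} {S : Set A}

theorem centralizer_eq_center_of_closure_eq_top (hgen : closure S = ⊤) :
    centralizer S = center A := by
  rw [← centralizer_closure, hgen, coe_top, centralizer_univ]

theorem index_center_dvd_factorial_ncard (hS : S.Finite) (hgen : closure S = ⊤)
    (hnorm : normalizer S = ⊤) : (center A).index ∣ S.ncard.factorial := by
  have : Finite S := hS
  let conjS : SubMulAction (ConjAct A) A :=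
    { carrier := S
      smul_mem' := fun g _ hs => le_set_normalizer_iff.mp hnorm.ge g.ofConjAct trivial _ hs }
  let φ : A →* Equiv.Perm conjS :=
    (MulAction.toPermHom (ConjAct A) conjS).comp ConjAct.toConjAct.toMonoidHom
  have hker : φ.ker ≤ center A := by
    rw [← centralizer_eq_center_of_closure_eq_top hgen]
    intro g hg s hs
    have hfix : g * s * g⁻¹ = s := congrArg Subtype.val (Equiv.congr_fun hg ⟨s, hs⟩)
    exact (mul_inv_eq_iff_eq_mul.mp hfix).symm
  calc (center A).index ∣ φ.ker.index := index_dvd_of_le hker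
    _ = Nat.card φ.range := index_ker φ
    _ ∣ Nat.card (Equiv.Perm conjS) := card_subgroup_dvd_card φ.range
    _ = S.ncard.factorial := Nat.card_perm

theorem sup_eq_top_of_coprime_index_s11 (h : B.index.Coprime C.index) : B ⊔ C = ⊤ :=
  index_eq_one.mp <| Nat.eq_one_of_dvd_coprimes h
    (index_dvd_of_le le_sup_left) (index_dvd_of_le le_sup_right)

theorem normal_of_sup_center_eq_top_s11 (h : B ⊔ center A = ⊤) : B.Normal := by
  rw [← normalizer_eq_top_iff, eq_top_iff, ← h]
  exact sup_le le_normalizer (center_le_normalizer _)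

theorem le_centralizer_of_isComplement [B.Normal] (hBS : IsComplement (B : Set A) S)
    (hnorm : B ≤ normalizer S) : B ≤ centralizer S := by
  intro b hb s hs
  have hcomm : b * s * b⁻¹ * s⁻¹ ∈ B := by
    simpa only [mul_assoc] using
      B.mul_mem hb (Normal.conj_mem ‹_› _ (B.inv_mem hb) s)
  have hfix : (⟨b * s * b⁻¹, le_set_normalizer_iff.mp hnorm b hb s hs⟩ : S) = ⟨s, hs⟩ :=
    (isComplement_iff_existsUnique_mul_inv_mem.mp hBS (b * s * b⁻¹)).unique (by simp) hcomm
  exact (mul_inv_eq_iff_eq_mul.mp (congrArg Subtype.val hfix)).symm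

theorem center_eq_top_of_isComplement_of_index_prime (hB : B.index.Prime)
    (hBS : IsComplement (B : Set A) S) (hone : 1 ∈ S) (hgen : closure S = ⊤)
    (hnorm : normalizer S = ⊤) : center A = ⊤ := by
  have hS : S.Finite := Set.finite_of_ncard_ne_zero (hBS.ncard_right ▸ hB.ne_zero)
  have hcop : B.index.Coprime (center A).index := by
    have hnorm' : normalizer (S \ {1}) = ⊤ := by
      rw [eq_top_iff, le_set_normalizer_iff]
      rintro g - s ⟨hs, hs1⟩
      exact ⟨le_set_normalizer_iff.mp hnorm.ge g trivial s hs, by simpa using hs1⟩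
    have hdvd := index_center_dvd_factorial_ncard hS.sdiff ((closure_sdiff_one S).trans hgen) hnorm'
    refine Nat.Coprime.coprime_dvd_right hdvd (hB.coprime_factorial_of_lt ?_)
    exact hBS.ncard_right ▸ Set.ncard_sdiff_singleton_lt_of_mem hone hS
  have hsup : B ⊔ center A = ⊤ := sup_eq_top_of_coprime_index_s11 hcop
  have : B.Normal := normal_of_sup_center_eq_top_s11 hsup
  have hBZ : B ≤ center A := by
    rw [← centralizer_eq_center_of_closure_eq_top hgen]
    exact le_centralizer_of_isComplement hBS (hnorm ▸ le_top)
  rwa [sup_eq_right.mpr hBZ] at hsup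

theorem sup_le_normalizer_inf_of_isMulCommutative [IsMulCommutative L] (hB : B ≤ normalizer L) :
    B ⊔ L ≤ normalizer (B ⊓ L : Subgroup A) := by
  refine sup_le ((le_inf le_normalizer hB).trans inf_normalizer_le_normalizer_inf) ?_
  calc L ≤ centralizer L := le_centralizer L
    _ ≤ centralizer (B ⊓ L : Subgroup A) := centralizer_le inf_le_right
    _ ≤ normalizer (B ⊓ L : Subgroup A) := centralizer_le_normalizer _

end Group

section LoopFolder

variable {G : Type*} [Group G] {H K L : Subgroup G} {T : Set G}

theorem IsRCC.le_normalizer_inter (hRCC : IsRCC T) : K ≤ normalizer (T ∩ K) := by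
  rw [le_set_normalizer_iff]
  rintro k hk t ⟨ht, htK⟩
  exact ⟨by simpa only [inv_inv] using hRCC t ht k⁻¹, K.mul_mem (K.mul_mem hk htK) (K.inv_mem hk)⟩

theorem IsLoopFolder.existsUnique_mem_inter (hLF : IsLoopFolder H T) (hHK : H ≤ K) (hLK : L ≤ K)
    (hTL : T ∩ K ⊆ L) {k x : G} (hk : k ∈ L) (hx : x ∈ L) :
    ∃! t, t ∈ T ∩ K ∧ k * (x * t⁻¹) * k⁻¹ ∈ H ⊓ L := by
  obtain ⟨t, ⟨ht, htH⟩, huniq⟩ := hLF.2 k x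
  have htK : t ∈ K := by
    simpa only [K.mul_mem_cancel_right (K.inv_mem (hLK hk)), K.mul_mem_cancel_left (hLK hk),
      K.mul_mem_cancel_left (hLK hx), inv_mem_iff] using hHK htH
  have htL : t ∈ L := hTL ⟨ht, htK⟩
  refine ⟨t, ⟨⟨ht, htK⟩, htH, ?_⟩, fun s hs => huniq s ⟨hs.1.1, hs.2.1⟩⟩
  exact L.mul_mem (L.mul_mem hk (L.mul_mem hx (L.inv_mem htL))) (L.inv_mem hk)

theorem IsLoopFolder.isComplement_subgroupOf (hLF : IsLoopFolder H T) (hHK : H ≤ K) (hLK : L ≤ K)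
    (hTL : T ∩ K ⊆ L) :
    IsComplement (H.subgroupOf L : Set L) ((↑) ⁻¹' (T ∩ K) : Set L) := by
  rw [isComplement_iff_existsUnique_mul_inv_mem]
  intro x
  obtain ⟨t, ⟨ht, htH⟩, huniq⟩ := hLF.existsUnique_mem_inter hHK hLK hTL L.one_mem x.2
  simp only [one_mul, inv_one, mul_one] at htH huniq
  refine ⟨⟨⟨t, hTL ht⟩, ht⟩, htH.1, fun s hs => Subtype.ext (Subtype.ext ?_)⟩
  exact huniq s ⟨s.2, hs, (x * (s : L)⁻¹).2⟩

theorem IsLoopFolder.card_inter (hLF : IsLoopFolder H T) (hHK : H ≤ K) (hLK : L ≤ K)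
    (hTL : T ∩ K ⊆ L) : Nat.card (T ∩ K : Set G) = H.relIndex L := by
  rw [relIndex, ← (hLF.isComplement_subgroupOf hHK hLK hTL).card_right]
  exact (Nat.card_preimage_of_injective Subtype.val_injective (by simpa using hTL)).symm

theorem IsLoopFolder.mul_eq (hLF : IsLoopFolder H T) (hHK : H ≤ K) (hLK : L ≤ K)
    (hTL : T ∩ K ⊆ L) : (H : Set G) * L = K := by
  refine Set.Subset.antisymm (mul_subset hHK hLK) fun x hx => ?_
  obtain ⟨t, ⟨ht, htH⟩, -⟩ :=
    hLF.existsUnique_mem_inter hHK le_rfl Set.inter_subset_right K.one_mem hx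
  simp only [one_mul, inv_one, mul_one] at htH
  exact ⟨x * t⁻¹, htH.1, t, hTL ht, inv_mul_cancel_right x t⟩

theorem IsLoopFolder.isMulCommutative_closure_inter (hLF : IsLoopFolder H T) (hRCC : IsRCC T)
    (hHK : H ≤ K) (hKH : (H.relIndex K).Prime) : IsMulCommutative (closure (T ∩ K)) := by
  have hLK : closure (T ∩ K) ≤ K := (closure_le K).mpr Set.inter_subset_right
  have hTL : T ∩ K ⊆ closure (T ∩ K) := subset_closure
  have hprime : (H.relIndex (closure (T ∩ K))).Prime := by
    rwa [← hLF.card_inter hHK hLK hTL, hLF.card_inter hHK le_rfl Set.inter_subset_right]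
  have hnorm : normalizer ((↑) ⁻¹' (T ∩ K) : Set (closure (T ∩ K))) = ⊤ := by
    rw [eq_top_iff, le_set_normalizer_iff]
    exact fun g _ t ht => le_set_normalizer_iff.mp hRCC.le_normalizer_inter g (hLK g.2) t ht
  have hcenter := center_eq_top_of_isComplement_of_index_prime hprime
    (hLF.isComplement_subgroupOf hHK hLK hTL) ⟨hLF.1, K.one_mem⟩ closure_closure_coe_preimage hnorm
  exact ⟨⟨fun a b => mem_center_iff.mp (hcenter ▸ mem_top b) a⟩⟩

end LoopFolder

theorem stmt_11_general {G : Type*} [Group G] {p : ℕ} (hp : p.Prime) {H K : Subgroup G} {T : Set G}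
    (hLF : IsLoopFolder H T) (hRCC : IsRCC T) (hHK : H ≤ K) (hKH : H.relIndex K = p) :
    Nat.card (T ∩ (K : Set G) : Set G) = p ∧
    (1 : G) ∈ T ∩ (K : Set G) ∧
    (∀ t ∈ T ∩ (K : Set G), ∀ k ∈ Subgroup.closure (T ∩ (K : Set G)),
      k⁻¹ * t * k ∈ T ∩ (K : Set G)) ∧
    (∀ k ∈ Subgroup.closure (T ∩ (K : Set G)), ∀ x ∈ Subgroup.closure (T ∩ (K : Set G)),
      ∃! t, t ∈ T ∩ (K : Set G) ∧
        k * (x * t⁻¹) * k⁻¹ ∈ H ⊓ Subgroup.closure (T ∩ (K : Set G))) ∧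
    (∀ a ∈ Subgroup.closure (T ∩ (K : Set G)), ∀ b ∈ Subgroup.closure (T ∩ (K : Set G)),
      a * b = b * a) ∧
    (∀ k ∈ K, ∀ x ∈ Subgroup.closure (T ∩ (K : Set G)),
      k⁻¹ * x * k ∈ Subgroup.closure (T ∩ (K : Set G))) ∧
    (H : Set G) * (Subgroup.closure (T ∩ (K : Set G)) : Set G) = (K : Set G) ∧
    (∀ k ∈ K, ∀ x ∈ H ⊓ Subgroup.closure (T ∩ (K : Set G)),
      k⁻¹ * x * k ∈ H ⊓ Subgroup.closure (T ∩ (K : Set G))) := by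
  have hLK : closure (T ∩ K) ≤ K := (closure_le K).mpr Set.inter_subset_right
  have hTL : T ∩ K ⊆ closure (T ∩ K) := subset_closure
  have hTnorm : K ≤ normalizer (T ∩ K) := hRCC.le_normalizer_inter
  have hLnorm : K ≤ normalizer (closure (T ∩ K)) :=
    hTnorm.trans (normalizer_le_normalizer_closure _)
  have hcomm : IsMulCommutative (closure (T ∩ K)) :=
    hLF.isMulCommutative_closure_inter hRCC hHK (hKH ▸ hp)
  have hmul : (H : Set G) * closure (T ∩ K) = K := hLF.mul_eq hHK hLK hTL
  have hHLnorm : K ≤ normalizer (H ⊓ closure (T ∩ K) : Subgroup G) := by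
    have hsup : H ⊔ closure (T ∩ K) = K := by rw [sup_eq_closure_mul, hmul, closure_eq]
    exact hsup.ge.trans (sup_le_normalizer_inf_of_isMulCommutative (hHK.trans hLnorm))
  exact ⟨(hLF.card_inter hHK le_rfl Set.inter_subset_right).trans hKH, ⟨hLF.1, K.one_mem⟩,
    fun t ht k hk => (mem_set_normalizer_iff''.mp (hTnorm (hLK hk)) t).mp ht,
    fun _ hk _ hx => hLF.existsUnique_mem_inter hHK hLK hTL hk hx,
    fun _ ha _ hb => setLike_mul_comm ha hb,
    fun k hk x hx => (mem_normalizer_iff''.mp (hLnorm hk) x).mp hx,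
    hmul,
    fun k hk x hx => (mem_normalizer_iff''.mp (hHLnorm hk) x).mp hx⟩

/-- First properties: with `T₁ := T ∩ K`, `K₁ := ⟨T₁⟩` and `H₁ := H ⊓ K₁`, the triple
`(K₁, H₁, T₁)` is an RCC loop folder of order `p`, `K₁` is abelian and normal in `K`,
`K = HK₁`, and `H₁` is normal in `K`. -/
theorem stmt_11 {G : Type*} [Group G] [Finite G] (p q : ℕ) (hp : p.Prime) (hq : q.Prime)
    (hpq : p ≠ q) (H K : Subgroup G) (T : Set G)
    (hLF : IsLoopFolder H T) (hRCC : IsRCC T) (hFaith : IsFaithfulFolder H)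
    (hord : Nat.card T = p * q) (hgen : Subgroup.closure T = ⊤)
    (hHK : H ≤ K) (hGK : K.index = q) (hKH : H.relIndex K = p) :
    Nat.card (T ∩ (K : Set G) : Set G) = p ∧
    (1 : G) ∈ T ∩ (K : Set G) ∧
    (∀ t ∈ T ∩ (K : Set G), ∀ k ∈ Subgroup.closure (T ∩ (K : Set G)),
      k⁻¹ * t * k ∈ T ∩ (K : Set G)) ∧
    (∀ k ∈ Subgroup.closure (T ∩ (K : Set G)), ∀ x ∈ Subgroup.closure (T ∩ (K : Set G)),
      ∃! t, t ∈ T ∩ (K : Set G) ∧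
        k * (x * t⁻¹) * k⁻¹ ∈ H ⊓ Subgroup.closure (T ∩ (K : Set G))) ∧
    (∀ a ∈ Subgroup.closure (T ∩ (K : Set G)), ∀ b ∈ Subgroup.closure (T ∩ (K : Set G)),
      a * b = b * a) ∧
    (∀ k ∈ K, ∀ x ∈ Subgroup.closure (T ∩ (K : Set G)),
      k⁻¹ * x * k ∈ Subgroup.closure (T ∩ (K : Set G))) ∧
    (H : Set G) * (Subgroup.closure (T ∩ (K : Set G)) : Set G) = (K : Set G) ∧
    (∀ k ∈ K, ∀ x ∈ H ⊓ Subgroup.closure (T ∩ (K : Set G)),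
      k⁻¹ * x * k ∈ H ⊓ Subgroup.closure (T ∩ (K : Set G))) :=
  stmt_11_general hp hLF hRCC hHK hKH
end

section
/- Let G be a finite group, K a subgroup of index 2 in G, and H ≤ K a subgroup whose core in G is trivial (⋂_{g ∈ G} g⁻¹Hg = 1). Let L ≤ H with L normal in K. Then for every a ∈ G with a ∉ K: L ∩ L^a = 1, every element of L commutes with every element of L^a := a⁻¹La, and the product LL^a = L × L^a is a normal subgroup of G. -/
open Pointwise

/-!
Conjugation by any element outside `K` interchanges `L` and `L^a`, since `K` normalizes `L` and has
index two; hence `L ⊓ L^a` and `L ⊔ L^a` are normal in `G`. The former lies in the core of `L`,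
which is trivial. An element of `L` outside `K` would, together with `K`, make `L` normal and so
trivial; thus `L ≤ K`. So `L` and `L^a` normalize each other, and `⁅L, L^a⁆ ≤ L ⊓ L^a = ⊥`.
-/

open Subgroup
open scoped commutatorElement

section

variable {G : Type*} [Group G] {K L M : Subgroup G} {a : G}

theorem conj_smul_eq_self_iff_mem_normalizer : MulAut.conj a • L = L ↔ a ∈ normalizer L :=
  mem_normalizer_iff_map_conj_eq.symm

theorem le_normalizer_conj_smul [K.Normal] (hKL : K ≤ normalizer L) (a : G) :
    K ≤ normalizer (MulAut.conj a • L : Subgroup G) :=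
  calc
    K = MulAut.conj a • K := (Normal.conj_smul_eq_self a K).symm
    _ ≤ MulAut.conj a • normalizer L := pointwise_smul_le_pointwise_smul_iff.mpr hKL
    _ ≤ normalizer (MulAut.conj a • L : Subgroup G) := le_normalizer_map _

theorem commutator_le_inf_of_le_normalizer (hLM : L ≤ normalizer M) (hML : M ≤ normalizer L) :
    ⁅L, M⁆ ≤ L ⊓ M :=
  le_inf (le_normalizer_iff_commutator_le_left.mp hML)
    (le_normalizer_iff_commutator_le_right.mp hLM)

theorem commute_of_le_normalizer_of_inf_eq_bot (hLM : L ≤ normalizer M) (hML : M ≤ normalizer L)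
    (hinf : L ⊓ M = ⊥) {x y : G} (hx : x ∈ L) (hy : y ∈ M) : Commute x y := by
  have hxy : ⁅x, y⁆ ∈ L ⊓ M :=
    commutator_le_inf_of_le_normalizer hLM hML (commutator_mem_commutator hx hy)
  rw [hinf, mem_bot] at hxy
  exact commutatorElement_eq_one_iff_commute.mp hxy

theorem normal_of_mem_normalizer_of_index_two (hK : K.index = 2) (hKL : K ≤ normalizer L)
    (ha : a ∉ K) (haL : a ∈ normalizer L) : L.Normal := by
  refine normalizer_eq_top_iff.mp ((eq_top_iff' _).mpr fun g => ?_)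
  by_cases hg : g ∈ K
  · exact hKL hg
  · have hag : a * g ∈ K := (mul_mem_iff_of_index_two hK).mpr (iff_of_false ha hg)
    exact (mul_mem_cancel_left haL).mp (hKL hag)

theorem le_of_normalCore_eq_bot_of_index_two (hK : K.index = 2) (hKL : K ≤ normalizer L)
    (hcore : L.normalCore = ⊥) : L ≤ K := by
  intro x hx
  by_contra hxK
  have : L.Normal := normal_of_mem_normalizer_of_index_two hK hKL hxK (le_normalizer hx)
  have hL : L = ⊥ := (normalCore_eq_self L).symm.trans hcore
  exact hxK (mem_bot.mp (hL ▸ hx) ▸ K.one_mem)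

theorem conj_smul_conj_smul_of_index_two (hK : K.index = 2) (hKL : K ≤ normalizer L) (a : G) :
    MulAut.conj a • MulAut.conj a • L = L := by
  rw [← mul_smul, ← map_mul, conj_smul_eq_self_iff_mem_normalizer]
  exact hKL (mul_self_mem_of_index_two hK a)

theorem inf_conj_smul_normal_of_index_two (hK : K.index = 2) (hKL : K ≤ normalizer L)
    (ha : a ∉ K) : (L ⊓ MulAut.conj a • L).Normal := by
  have : K.Normal := normal_of_index_eq_two hK
  refine normal_of_mem_normalizer_of_index_two hK ?_ ha ?_
  · exact (le_inf hKL (le_normalizer_conj_smul hKL a)).trans inf_normalizer_le_normalizer_inf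
  · rw [← conj_smul_eq_self_iff_mem_normalizer, smul_inf,
      conj_smul_conj_smul_of_index_two hK hKL, inf_comm]

theorem sup_conj_smul_normal_of_index_two (hK : K.index = 2) (hKL : K ≤ normalizer L)
    (ha : a ∉ K) : (L ⊔ MulAut.conj a • L).Normal := by
  have : K.Normal := normal_of_index_eq_two hK
  refine normal_of_mem_normalizer_of_index_two hK ?_ ha ?_
  · exact (le_inf hKL (le_normalizer_conj_smul hKL a)).trans
      (normalizer_inf_normalizer_le_normalizer_sup _ _)
  · rw [← conj_smul_eq_self_iff_mem_normalizer, smul_sup,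
      conj_smul_conj_smul_of_index_two hK hKL, sup_comm]

theorem inf_conj_smul_eq_bot_of_index_two (hK : K.index = 2) (hKL : K ≤ normalizer L)
    (hcore : L.normalCore = ⊥) (ha : a ∉ K) : L ⊓ MulAut.conj a • L = ⊥ := by
  have := inf_conj_smul_normal_of_index_two hK hKL ha
  exact le_bot_iff.mp (hcore ▸ normal_le_normalCore.mpr inf_le_left)

end

theorem stmt_12_general {G : Type*} [Group G] (K H L : Subgroup G) (hK : K.index = 2)
    (hcore : ∀ x : G, (∀ g : G, g * x * g⁻¹ ∈ H) → x = 1)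
    (hLH : L ≤ H) (hLK : ∀ k ∈ K, ∀ x ∈ L, k⁻¹ * x * k ∈ L)
    (a : G) (ha : a ∉ K) :
    L ⊓ Subgroup.map (MulAut.conj a⁻¹).toMonoidHom L = ⊥ ∧
    (∀ x ∈ L, ∀ y ∈ Subgroup.map (MulAut.conj a⁻¹).toMonoidHom L, x * y = y * x) ∧
    (L : Set G) * (Subgroup.map (MulAut.conj a⁻¹).toMonoidHom L : Set G) =
      ((L ⊔ Subgroup.map (MulAut.conj a⁻¹).toMonoidHom L : Subgroup G) : Set G) ∧
    (L ⊔ Subgroup.map (MulAut.conj a⁻¹).toMonoidHom L).Normal := by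
  change L ⊓ MulAut.conj a⁻¹ • L = ⊥ ∧ (∀ x ∈ L, ∀ y ∈ MulAut.conj a⁻¹ • L, x * y = y * x) ∧
    (L : Set G) * (MulAut.conj a⁻¹ • L : Subgroup G) = (L ⊔ MulAut.conj a⁻¹ • L : Subgroup G) ∧
    (L ⊔ MulAut.conj a⁻¹ • L).Normal
  have : K.Normal := normal_of_index_eq_two hK
  have ha' : a⁻¹ ∉ K := inv_mem_iff.not.mpr ha
  have hKL : K ≤ normalizer L := le_normalizer_iff.mpr fun k hk x hx => by
    simpa only [inv_inv] using hLK k⁻¹ (K.inv_mem hk) x hx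
  have hcoreL : L.normalCore = ⊥ :=
    (eq_bot_iff_forall _).mpr fun x hx => hcore x fun g => hLH (hx g)
  have hL : L ≤ K := le_of_normalCore_eq_bot_of_index_two hK hKL hcoreL
  have hLa : MulAut.conj a⁻¹ • L ≤ K :=
    (pointwise_smul_le_pointwise_smul_iff.mpr hL).trans_eq (Normal.conj_smul_eq_self a⁻¹ K)
  have hLN : L ≤ normalizer (MulAut.conj a⁻¹ • L : Subgroup G) :=
    hL.trans (le_normalizer_conj_smul hKL a⁻¹)
  have hinf := inf_conj_smul_eq_bot_of_index_two hK hKL hcoreL ha'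
  exact ⟨hinf,
    fun _ hx _ hy => commute_of_le_normalizer_of_inf_eq_bot hLN (hLa.trans hKL) hinf hx hy,
    (coe_mul_of_left_le_normalizer_right _ _ hLN).symm,
    sup_conj_smul_normal_of_index_two hK hKL ha'⟩

/-- If `K` has index `2` in `G`, `H ≤ K` has trivial core in `G`, and `L ≤ H` is normal
in `K`, then for `a ∉ K` the conjugate `L^a = a⁻¹La` satisfies `L ∩ L^a = 1`, elements of
`L` and `L^a` commute, and `LL^a = L × L^a` is a normal subgroup of `G`. -/
theorem stmt_12 {G : Type*} [Group G] [Finite G] (K H L : Subgroup G)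
    (hK : K.index = 2) (hHK : H ≤ K)
    (hcore : ∀ x : G, (∀ g : G, g * x * g⁻¹ ∈ H) → x = 1)
    (hLH : L ≤ H) (hLK : ∀ k ∈ K, ∀ x ∈ L, k⁻¹ * x * k ∈ L)
    (a : G) (ha : a ∉ K) :
    L ⊓ Subgroup.map (MulAut.conj a⁻¹).toMonoidHom L = ⊥ ∧
    (∀ x ∈ L, ∀ y ∈ Subgroup.map (MulAut.conj a⁻¹).toMonoidHom L, x * y = y * x) ∧
    (L : Set G) * (Subgroup.map (MulAut.conj a⁻¹).toMonoidHom L : Set G) =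
      ((L ⊔ Subgroup.map (MulAut.conj a⁻¹).toMonoidHom L : Subgroup G) : Set G) ∧
    (L ⊔ Subgroup.map (MulAut.conj a⁻¹).toMonoidHom L).Normal :=
  stmt_12_general K H L hK hcore hLH hLK a ha
end
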